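/- If nτ/ζ_τ → ∞ and θ_0 ∈ ℓ0[p_n] with p_n = o(n), then the radius r̂(α,τ) of the horseshoe posterior credible ball satisfies r̂(α,τ) ≥ 0.5 √(n τ ζ_τ) with P_{θ_0}-probability tending to one. -/

import Mathlib

open MeasureTheory ProbabilityTheory Filter Set Real Asymptotics
open scoped ENNReal NNReal BigOperators

noncomputable section

/-- Standard normal density `φ`. -/
def phiN (x : ℝ) : ℝ := (Real.sqrt (2 * Real.pi))⁻¹ * Real.exp (-(x ^ 2) / 2)

/-- Horseshoe prior density with global parameter `τ`. -/
def gHS (τ θ : ℝ) : ℝ :=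
  ∫ l in Set.Ioi (0 : ℝ), phiN (θ / (l * τ)) / (l * τ) * (2 / (Real.pi * (1 + l ^ 2)))

/-- Unnormalised marginal posterior density of `θᵢ` given `Yᵢ = y` (parameter `τ`). -/
def postDens (τ y θ : ℝ) : ℝ := phiN (y - θ) * gHS τ θ

/-- Bayesian marginal density `ψ_τ(y)` of one observation. -/
def margDens (τ y : ℝ) : ℝ := ∫ θ, postDens τ y θ

/-- Marginal posterior probability `Π(θᵢ ∈ A | Yᵢ = y, τ)`. -/
def postProb (τ y : ℝ) (A : Set ℝ) : ℝ := (∫ θ in A, postDens τ y θ) / margDens τ y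

/-- Marginal posterior mean `θ̂ᵢ(τ)`. -/
def postMean (τ y : ℝ) : ℝ := (∫ θ, θ * postDens τ y θ) / margDens τ y

/-- Marginal posterior variance. -/
def postVar (τ y : ℝ) : ℝ :=
  (∫ θ, (θ - postMean τ y) ^ 2 * postDens τ y θ) / margDens τ y

/-- Marginal posterior fourth central moment. -/
def postMom4 (τ y : ℝ) : ℝ :=
  (∫ θ, (θ - postMean τ y) ^ 4 * postDens τ y θ) / margDens τ y

/-- `ζ_τ = √(2 log (1/τ))`. -/
def zet (τ : ℝ) : ℝ := Real.sqrt (2 * Real.log (1 / τ))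

/-- `τ_n(p) = (p/n) √(log (n/p))`. -/
def tauOpt (n p : ℕ) : ℝ := ((p : ℝ) / (n : ℝ)) * Real.sqrt (Real.log ((n : ℝ) / (p : ℝ)))

/-- The law `P_{θ₀}` of `Y^n`. -/
def Pdata {n : ℕ} (θ₀ : Fin n → ℝ) : Measure (Fin n → ℝ) :=
  Measure.pi fun i => gaussianReal (θ₀ i) 1

/-- The standard normal upper `α`-quantile `z_α`. -/
def zquant (α : ℝ) : ℝ := sInf {z : ℝ | ((gaussianReal 0 1) (Set.Ioi z)).toReal ≤ α}

/-- Nearly black vectors `ℓ₀[p]`. -/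
def nearlyBlack (n p : ℕ) : Set (Fin n → ℝ) :=
  {θ | ({i | θ i ≠ 0} : Set (Fin n)).ncard ≤ p}

/-- Unnormalised posterior density of the full vector `θ` given `Y^n = y` and `τ`. -/
def fullDens {n : ℕ} (τ : ℝ) (y θ : Fin n → ℝ) : ℝ := ∏ i, postDens τ (y i) (θ i)

/-- Posterior probability `Π(θ ∈ A | Y^n = y, τ)` of a set of vectors. -/
def fullPostProb {n : ℕ} (τ : ℝ) (y : Fin n → ℝ) (A : Set (Fin n → ℝ)) : ℝ :=
  (∫ θ in A, fullDens τ y θ) / ∫ θ, fullDens τ y θ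

/-- Posterior mean of the full vector (coordinatewise, by conditional independence). -/
def fullPostMean {n : ℕ} (τ : ℝ) (y : Fin n → ℝ) : Fin n → ℝ := fun i => postMean τ (y i)

/-- Euclidean distance on `ℝⁿ`. -/
def l2dist {n : ℕ} (a b : Fin n → ℝ) : ℝ := Real.sqrt (∑ i, (a i - b i) ^ 2)

/-- Marginal likelihood of `τ`. -/
def lik {n : ℕ} (τ : ℝ) (y : Fin n → ℝ) : ℝ := ∏ i, margDens τ (y i)

/-- Unnormalised hierarchical posterior weight of `τ` given the data. -/
def hierWeight {n : ℕ} (pr : ℝ → ℝ) (y : Fin n → ℝ) (τ : ℝ) : ℝ := pr τ * lik τ y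

/-- Hierarchical posterior distribution of `τ`. -/
def hierTauProb {n : ℕ} (pr : ℝ → ℝ) (y : Fin n → ℝ) (A : Set ℝ) : ℝ :=
  (∫ τ in A, hierWeight pr y τ) / ∫ τ, hierWeight pr y τ

/-- Hierarchical marginal posterior probability for coordinate `i`. -/
def hierPostProb {n : ℕ} (pr : ℝ → ℝ) (y : Fin n → ℝ) (i : Fin n) (A : Set ℝ) : ℝ :=
  (∫ τ, hierWeight pr y τ * postProb τ (y i) A) / ∫ τ, hierWeight pr y τ

/-- Hierarchical marginal posterior mean for coordinate `i`. -/
def hierPostMean {n : ℕ} (pr : ℝ → ℝ) (y : Fin n → ℝ) (i : Fin n) : ℝ :=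
  (∫ τ, hierWeight pr y τ * postMean τ (y i)) / ∫ τ, hierWeight pr y τ

/-- Hierarchical posterior probability of a set of vectors. -/
def hierFullPostProb {n : ℕ} (pr : ℝ → ℝ) (y : Fin n → ℝ) (A : Set (Fin n → ℝ)) : ℝ :=
  (∫ τ, pr τ * ∫ θ in A, fullDens τ y θ) / ∫ τ, pr τ * ∫ θ, fullDens τ y θ

/-- Hierarchical posterior mean vector. -/
def hierFullPostMean {n : ℕ} (pr : ℝ → ℝ) (y : Fin n → ℝ) : Fin n → ℝ :=
  fun i => hierPostMean pr y i

/-- The functions `I_k`. -/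
def Ik (τ k y : ℝ) : ℝ :=
  ∫ z in Set.Ioc (0 : ℝ) 1, z ^ k * (τ ^ 2 + (1 - τ ^ 2) * z)⁻¹ * Real.exp (y ^ 2 * z / 2)

/-- The function `m_τ`. -/
def mHS (τ y : ℝ) : ℝ :=
  y ^ 2 * ((Ik τ (1 / 2) y - Ik τ (3 / 2) y) / Ik τ (-(1 / 2)) y) -
    Ik τ (1 / 2) y / Ik τ (-(1 / 2)) y

/-- The excessive-bias restriction with witness `q`. -/
def EBRwith (n : ℕ) (A Cs C : ℝ) (θ : Fin n → ℝ) (q : ℕ) : Prop :=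
  1 ≤ q ∧
    (∑ i, if |θ i| < A * Real.sqrt (2 * Real.log ((n : ℝ) / (q : ℝ))) then (θ i) ^ 2 else 0)
        ≤ C * (q : ℝ) * Real.log ((n : ℝ) / (q : ℝ)) ∧
    (q : ℝ) / Cs ≤
      (({i | A * Real.sqrt (2 * Real.log ((n : ℝ) / (q : ℝ))) ≤ |θ i|} : Set (Fin n)).ncard : ℝ)

/-- The excessive-bias restriction. -/
def EBR (n : ℕ) (A Cs C : ℝ) (θ : Fin n → ℝ) : Prop := ∃ q, EBRwith n A Cs C θ q

/-- The class `Θ[p]`. -/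
def ThetaClass (n p : ℕ) (A Cs C : ℝ) : Set (Fin n → ℝ) :=
  {θ | θ ∈ nearlyBlack n p ∧ EBR n A Cs C θ}

/-- Smallest witness `q` in the excessive-bias restriction. -/
def qmin (n : ℕ) (A Cs C : ℝ) (θ : Fin n → ℝ) : ℕ := sInf {q | EBRwith n A Cs C θ q}

/-- `p̃(θ₀)`: the number of coordinates above threshold for the smallest witness `q`. -/
def ptilde (n : ℕ) (A Cs C : ℝ) (θ : Fin n → ℝ) : ℕ :=
  ({i | A * Real.sqrt (2 * Real.log ((n : ℝ) / (qmin n A Cs C θ : ℝ))) ≤ |θ i|} :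
    Set (Fin n)).ncard

/-!
Conditionally on `Y`, the coordinates of `θ` are independent under the posterior, so a Chernoff
bound controls the posterior mass of the ball of radius `r` around the posterior mean by
`exp (l r²)` times the product of the posterior Laplace transforms of `(θᵢ - E θᵢ)²`. Each transform
is at most `1 + l² m₄ / 2 - l v`, where `v` and `m₄` are the posterior variance and fourth central
moment. All but a small fraction of the observations are standard normal, and under a standard
normal observation `v` averages to at least `0.251 τ (ζ + 0.01)`, slightly more than the `τ ζ / 4`
allotted to each coordinate by `r² = n τ ζ / 4`, while the average of `m₄` over `|y| ≤ ζ + 10` is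
`O(τ (1 + ζ)³)`. Taking `l` of order `(1 + ζ)⁻²`, the expected posterior mass of the ball is
exponentially small in `n τ / (1 + ζ)`, and Markov's inequality shows that the ball of credibility
`1 - α` is larger with high probability.

The moments are computed from the representation of the horseshoe density as a scale mixture of
normals: given the shrinkage coefficient `κ`, the posterior of a coordinate is normal with mean
`κ y` and variance `κ`.
-/

/-! ### Elementary inequalities -/

lemma exp_neg_le_quadratic {x : ℝ} (hx : 0 ≤ x) : exp (-x) ≤ 1 - x + x ^ 2 / 2 := by
  have h_pos : 0 < 1 + x + x ^ 2 / 2 := by positivity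
  calc exp (-x) ≤ (1 + x + x ^ 2 / 2)⁻¹ := by
        rw [exp_neg]
        gcongr
        exact quadratic_le_exp_of_nonneg hx
    _ ≤ 1 - x + x ^ 2 / 2 := by
        rw [inv_le_iff_one_le_mul₀ h_pos]
        nlinarith [pow_nonneg hx 4]

lemma exp_sub_one_le_mul_exp (x : ℝ) : exp x - 1 ≤ x * exp x := by
  have h : (1 - x) * exp x ≤ exp (-x) * exp x := by
    gcongr
    linarith [add_one_le_exp (-x)]
  rw [← exp_add, neg_add_cancel, exp_zero] at h
  linarith

lemma log_ten_lt : log 10 < 2.311 := by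
  have h : log (10 ^ 3) < log (2 ^ 10) := log_lt_log (by norm_num) (by norm_num)
  rw [log_pow, log_pow] at h
  push_cast at h
  linarith [log_two_lt_d9]

lemma log_inv_le_of_one_tenth_le {t : ℝ} (ht : 1 / 10 ≤ t) (ht1 : t ≤ 1) :
    log t⁻¹ ≤ 2.568 * (1 - t) := by
  have h_chord : 10 / 9 * (1 - t) * log (1 / 10) + 10 / 9 * (t - 1 / 10) * log 1 ≤
      log (10 / 9 * (1 - t) * (1 / 10) + 10 / 9 * (t - 1 / 10) * 1) :=
    strictConcaveOn_log_Ioi.concaveOn.2 (by norm_num) (by norm_num)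
      (by linarith) (by linarith) (by ring)
  have h_combo : 10 / 9 * (1 - t) * (1 / 10) + 10 / 9 * (t - 1 / 10) * 1 = t := by ring
  rw [h_combo, one_div, log_inv, log_one] at h_chord
  rw [log_inv]
  nlinarith [mul_le_mul_of_nonneg_left log_ten_lt.le (sub_nonneg.2 ht1)]

lemma mul_log_inv_le_of_le_one_tenth {t : ℝ} (ht : 0 < t) (ht1 : t ≤ 1 / 10) :
    t * log t⁻¹ ≤ 0.2311 := by
  have h_split : log t⁻¹ = log 10 + log (10 * t)⁻¹ := by
    rw [← log_mul (by norm_num) (by positivity)]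
    congr 1
    field_simp
  have h_le : t * log (10 * t)⁻¹ ≤ t * ((10 * t)⁻¹ - 1) := by
    gcongr
    exact log_le_sub_one_of_pos (by positivity)
  have h_cancel : t * (10 * t)⁻¹ = 1 / 10 := by
    field_simp
  rw [h_split]
  nlinarith [log_ten_lt]

lemma arccos_le_pi_div_two_mul_sqrt {t : ℝ} (ht : 0 ≤ t) :
    arccos t ≤ π / 2 * √(1 - t ^ 2) := by
  have h := mul_le_sin (arccos_nonneg t) (arccos_le_pi_div_two.2 ht)
  rw [sin_arccos] at h
  calc arccos t = π / 2 * (2 / π * arccos t) := by field_simp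
    _ ≤ π / 2 * √(1 - t ^ 2) := by gcongr

lemma pi_div_two_mul_one_sub_le_arccos {t : ℝ} (ht : 0 ≤ t) (ht1 : t ≤ 1) :
    π / 2 * (1 - t) ≤ arccos t := by
  have h := mul_le_sin (arcsin_nonneg.2 ht) (arcsin_le_pi_div_two t)
  rw [sin_arcsin (by linarith) ht1] at h
  rw [arccos_eq_pi_div_two_sub_arcsin]
  calc π / 2 * (1 - t) ≤ π / 2 * (1 - 2 / π * arcsin t) := by gcongr
    _ = π / 2 - arcsin t := by field_simp

lemma sqrt_one_sub_sq_le_arccos (t : ℝ) :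
    √(1 - t ^ 2) ≤ arccos t := by
  simpa only [sin_arccos] using sin_le (arccos_nonneg t)

lemma hasDerivAt_rational_mul_sqrt_sub_arccos {t : ℝ} (ht : 0 < t) (ht1 : t < 1) :
    HasDerivAt (fun t => (8 + 7 * t) * √(1 - t ^ 2) / (5 + 8 * t + 2 * t ^ 2) - arccos t)
      (-(4 * (1 - t) ^ 2 * √(1 - t ^ 2) / (5 + 8 * t + 2 * t ^ 2) ^ 2)) t := by
  have h_pos : 0 < 1 - t ^ 2 := by nlinarith
  have h_num : HasDerivAt (fun t : ℝ => 8 + 7 * t) 7 t := by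
    simpa using ((hasDerivAt_id t).const_mul 7).const_add 8
  have h_sqrt : HasDerivAt (fun t : ℝ => √(1 - t ^ 2)) (-(2 * t) / (2 * √(1 - t ^ 2))) t := by
    simpa using ((hasDerivAt_pow 2 t).const_sub 1).sqrt h_pos.ne'
  have h_den : HasDerivAt (fun t : ℝ => 5 + 8 * t + 2 * t ^ 2) (8 + 2 * (2 * t)) t := by
    simpa using (((hasDerivAt_id t).const_mul 8).const_add 5).fun_add
      ((hasDerivAt_pow 2 t).const_mul 2)
  refine (((h_num.mul h_sqrt).div h_den (by positivity)).sub
    (hasDerivAt_arccos (by linarith) ht1.ne)).congr_deriv ?_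
  have : 0 < √(1 - t ^ 2) := sqrt_pos.2 h_pos
  have h_sq : √(1 - t ^ 2) ^ 2 = 1 - t ^ 2 := sq_sqrt h_pos.le
  simp only [Pi.mul_apply]
  field_simp
  rw [h_sq]
  ring

-- The rational factor is chosen so that the two sides agree to high order at `t = 1`.
lemma arccos_le_rational_mul_sqrt {t : ℝ} (ht : 0 ≤ t) (ht1 : t ≤ 1) :
    arccos t ≤ (8 + 7 * t) * √(1 - t ^ 2) / (5 + 8 * t + 2 * t ^ 2) := by
  set F : ℝ → ℝ := fun t => (8 + 7 * t) * √(1 - t ^ 2) / (5 + 8 * t + 2 * t ^ 2) - arccos t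
  have h_cont : ContinuousOn F (Icc 0 1) := by
    refine ContinuousOn.sub (ContinuousOn.div (by fun_prop) (by fun_prop) fun t ht => ?_)
      continuous_arccos.continuousOn
    have := ht.1
    positivity
  have h_anti : AntitoneOn F (Icc 0 1) := by
    refine antitoneOn_of_hasDerivWithinAt_nonpos (convex_Icc 0 1) h_cont
      (f' := fun t => -(4 * (1 - t) ^ 2 * √(1 - t ^ 2) / (5 + 8 * t + 2 * t ^ 2) ^ 2))
      (fun t ht => ?_) fun t _ => neg_nonpos.2 (by positivity)
    rw [interior_Icc] at ht
    exact (hasDerivAt_rational_mul_sqrt_sub_arccos ht.1 ht.2).hasDerivWithinAt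
  have h := h_anti ⟨ht, ht1⟩ (right_mem_Icc.2 zero_le_one) ht1
  simp only [F, one_pow, sub_self, sqrt_zero, mul_zero, zero_div, arccos_one] at h
  linarith

/-! ### The shrinkage coefficient -/

lemma hasDerivAt_sin_arctan (s : ℝ) :
    HasDerivAt (fun s => sin (arctan s)) (cos (arctan s) / (1 + s ^ 2)) s := by
  simpa only [mul_one_div] using (hasDerivAt_arctan s).sin

lemma image_sin_arctan_Ioi_zero : (fun s => sin (arctan s)) '' Ioi 0 = Ioo 0 1 := by
  ext x
  constructor
  · rintro ⟨s, hs, rfl⟩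
    refine ⟨sin_arctan_pos.2 hs, ?_⟩
    nlinarith [sin_sq_add_cos_sq (arctan s), cos_arctan_pos s]
  · rintro ⟨hx, hx1⟩
    have h_lt : arcsin x < π / 2 := arcsin_lt_pi_div_two.2 hx1
    have h_pos : 0 < arcsin x := arcsin_pos.2 hx
    refine ⟨tan (arcsin x), tan_pos_of_pos_of_lt_pi_div_two h_pos h_lt, ?_⟩
    simp only
    rw [arctan_tan (by linarith [pi_pos]) h_lt, sin_arcsin (by linarith) hx1.le]

lemma integral_Ioi_cos_arctan_mul_comp_sin_arctan (F : ℝ → ℝ) :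
    ∫ s in Ioi (0 : ℝ), cos (arctan s) / (1 + s ^ 2) * F (sin (arctan s)) =
      ∫ x in (0 : ℝ)..1, F x := by
  rw [intervalIntegral.integral_of_le zero_le_one, integral_Ioc_eq_integral_Ioo,
    ← image_sin_arctan_Ioi_zero, integral_image_eq_integral_abs_deriv_smul measurableSet_Ioi
      (fun s _ => (hasDerivAt_sin_arctan s).hasDerivWithinAt) sin_arctan_strictMono.injective.injOn]
  refine setIntegral_congr_fun measurableSet_Ioi fun s _ => ?_
  have := cos_arctan_pos s
  rw [smul_eq_mul, abs_of_pos (by positivity)]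

/-- The unnormalised density, on `(0, 1)`, of `x = √κ` under the horseshoe prior, where
`κ = (lτ)² / (1 + (lτ)²)` is the shrinkage coefficient of the local scale `l`: the posterior mean
given `l` is `κ y`. -/
def shrinkageWeight (τ x : ℝ) : ℝ := (τ ^ 2 + (1 - τ ^ 2) * x ^ 2)⁻¹

/-- The moments of `x = √κ` under the posterior given `y`, up to a factor not depending on `k`.
In the notation of the paper, `2 * shrinkageMoment τ y (2 * k)` is `I_{k - 1/2}(y)`. -/
def shrinkageMoment (τ y : ℝ) (k : ℕ) : ℝ :=
  ∫ x in (0 : ℝ)..1, x ^ k * exp (x ^ 2 * y ^ 2 / 2) * shrinkageWeight τ x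

lemma shrinkageWeight_sin_arctan (τ s : ℝ) :
    shrinkageWeight τ (sin (arctan s)) = (1 + s ^ 2) / (τ ^ 2 + s ^ 2) := by
  rw [shrinkageWeight, sin_sq_arctan, ← inv_div]
  have : 1 + s ^ 2 ≠ 0 := by positivity
  field_simp
  ring

lemma integral_Ioi_halfCauchy_comp_mul {τ : ℝ} (hτ : 0 < τ) (F : ℝ → ℝ) :
    ∫ l in Ioi (0 : ℝ), F (l * τ) * (2 / (π * (1 + l ^ 2))) =
      2 * τ / π * ∫ s in Ioi (0 : ℝ), F s / (τ ^ 2 + s ^ 2) := by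
  have h := integral_comp_mul_right_Ioi
    (fun s => F s * (2 * τ ^ 2 / (π * (τ ^ 2 + s ^ 2)))) 0 hτ
  rw [zero_mul, smul_eq_mul] at h
  calc ∫ l in Ioi (0 : ℝ), F (l * τ) * (2 / (π * (1 + l ^ 2)))
      = ∫ l in Ioi (0 : ℝ), F (l * τ) * (2 * τ ^ 2 / (π * (τ ^ 2 + (l * τ) ^ 2))) := by
        congr! 3 with l
        field_simp
    _ = τ⁻¹ * ∫ s in Ioi (0 : ℝ), F s * (2 * τ ^ 2 / (π * (τ ^ 2 + s ^ 2))) := h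
    _ = 2 * τ / π * ∫ s in Ioi (0 : ℝ), F s / (τ ^ 2 + s ^ 2) := by
        rw [← integral_const_mul, ← integral_const_mul]
        congr! 2 with s
        field_simp

section ShrinkageWeight

variable {τ x : ℝ}

lemma shrinkageWeight_denom_pos (hτ : τ ∈ Ioo 0 1) (x : ℝ) : 0 < τ ^ 2 + (1 - τ ^ 2) * x ^ 2 := by
  have h_sq : 0 < 1 - τ ^ 2 := by nlinarith [hτ.1, hτ.2]
  have := hτ.1
  positivity

lemma shrinkageWeight_pos (hτ : τ ∈ Ioo 0 1) (x : ℝ) : 0 < shrinkageWeight τ x :=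
  inv_pos.2 (shrinkageWeight_denom_pos hτ x)

@[fun_prop]
lemma continuous_shrinkageWeight (hτ : τ ∈ Ioo 0 1) : Continuous (shrinkageWeight τ) := by
  unfold shrinkageWeight
  exact Continuous.inv₀ (by fun_prop) fun x => (shrinkageWeight_denom_pos hτ x).ne'

lemma sq_mul_shrinkageWeight_le_one (hτ : τ ∈ Ioo 0 1) (hx : x ∈ Icc 0 1) :
    x ^ 2 * shrinkageWeight τ x ≤ 1 := by
  rw [shrinkageWeight, ← div_eq_mul_inv, div_le_one (shrinkageWeight_denom_pos hτ x)]
  have h_sq : x ^ 2 ≤ 1 := pow_le_one₀ hx.1 hx.2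
  nlinarith [sq_nonneg τ]

lemma hasDerivAt_arctan_mul_div (hτ : τ ∈ Ioo 0 1) (x : ℝ) :
    HasDerivAt (fun x => arctan (√(1 - τ ^ 2) / τ * x) / (τ * √(1 - τ ^ 2)))
      (shrinkageWeight τ x) x := by
  have h_pos : 0 < 1 - τ ^ 2 := by nlinarith [hτ.1, hτ.2]
  have : 0 < √(1 - τ ^ 2) := sqrt_pos.2 h_pos
  have h_τ : τ ≠ 0 := hτ.1.ne'
  have := shrinkageWeight_denom_pos hτ x
  have h_lin : HasDerivAt (fun x => √(1 - τ ^ 2) / τ * x) (√(1 - τ ^ 2) / τ) x := by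
    simpa using (hasDerivAt_id x).const_mul (√(1 - τ ^ 2) / τ)
  refine (h_lin.arctan.div_const _).congr_deriv ?_
  have h_sq : 1 + (√(1 - τ ^ 2) / τ * x) ^ 2 = (τ ^ 2 + (1 - τ ^ 2) * x ^ 2) / τ ^ 2 := by
    rw [mul_pow, div_pow, sq_sqrt h_pos.le]
    field_simp
  rw [h_sq, shrinkageWeight]
  field_simp

lemma integral_shrinkageWeight (hτ : τ ∈ Ioo 0 1) :
    ∫ x in (0 : ℝ)..1, shrinkageWeight τ x = arccos τ / (τ * √(1 - τ ^ 2)) := by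
  rw [intervalIntegral.integral_eq_sub_of_hasDerivAt
    (fun x _ => hasDerivAt_arctan_mul_div hτ x)
    ((continuous_shrinkageWeight hτ).intervalIntegrable 0 1), arccos_eq_arctan hτ.1]
  simp

lemma integral_sq_mul_shrinkageWeight (hτ : τ ∈ Ioo 0 1) :
    (1 - τ ^ 2) * ∫ x in (0 : ℝ)..1, x ^ 2 * shrinkageWeight τ x =
      1 - τ ^ 2 * ∫ x in (0 : ℝ)..1, shrinkageWeight τ x := by
  have := continuous_shrinkageWeight hτ
  have h_split : ∀ x, (1 - τ ^ 2) * (x ^ 2 * shrinkageWeight τ x) =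
      1 - τ ^ 2 * shrinkageWeight τ x := fun x => by
    have := (shrinkageWeight_denom_pos hτ x).ne'
    rw [shrinkageWeight]
    field_simp
    ring
  simp_rw [← intervalIntegral.integral_const_mul, h_split]
  rw [intervalIntegral.integral_sub (by simp) (by apply Continuous.intervalIntegrable; fun_prop)]
  simp

lemma one_div_le_integral_shrinkageWeight (hτ : τ ∈ Ioo 0 1) :
    1 / τ ≤ ∫ x in (0 : ℝ)..1, shrinkageWeight τ x := by
  have h_sqrt : 0 < √(1 - τ ^ 2) := sqrt_pos.2 (by nlinarith [hτ.1, hτ.2])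
  have := hτ.1
  rw [integral_shrinkageWeight hτ, div_le_div_iff₀ (by positivity) (by positivity)]
  nlinarith [sqrt_one_sub_sq_le_arccos τ]

lemma integral_shrinkageWeight_le (hτ : τ ∈ Ioo 0 1) :
    ∫ x in (0 : ℝ)..1, shrinkageWeight τ x ≤ π / 2 / τ := by
  have h_sqrt : 0 < √(1 - τ ^ 2) := sqrt_pos.2 (by nlinarith [hτ.1, hτ.2])
  have := hτ.1
  rw [integral_shrinkageWeight hτ, div_le_div_iff₀ (by positivity) (by positivity)]
  nlinarith [arccos_le_pi_div_two_mul_sqrt hτ.1.le]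

lemma le_integral_shrinkageWeight (hτ : τ ∈ Ioo 0 1) :
    π / 2 * (1 - τ) / τ ≤ ∫ x in (0 : ℝ)..1, shrinkageWeight τ x := by
  have h_sqrt : 0 < √(1 - τ ^ 2) := sqrt_pos.2 (by nlinarith [hτ.1, hτ.2])
  have h_sqrt_le : √(1 - τ ^ 2) ≤ 1 := sqrt_le_one.2 (by nlinarith [sq_nonneg τ])
  have := hτ.1
  have h_arccos := pi_div_two_mul_one_sub_le_arccos hτ.1.le hτ.2.le
  rw [integral_shrinkageWeight hτ, div_le_div_iff₀ (by positivity) (by positivity)]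
  nlinarith [mul_le_mul h_arccos h_sqrt_le h_sqrt.le (arccos_nonneg τ)]

lemma integral_shrinkageWeight_le_rational (hτ : τ ∈ Ioo 0 1) :
    ∫ x in (0 : ℝ)..1, shrinkageWeight τ x ≤
      (8 + 7 * τ) / (τ * (5 + 8 * τ + 2 * τ ^ 2)) := by
  have h_sqrt : 0 < √(1 - τ ^ 2) := sqrt_pos.2 (by nlinarith [hτ.1, hτ.2])
  have := hτ.1
  calc ∫ x in (0 : ℝ)..1, shrinkageWeight τ x
      = arccos τ / (τ * √(1 - τ ^ 2)) := integral_shrinkageWeight hτ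
    _ ≤ (8 + 7 * τ) * √(1 - τ ^ 2) / (5 + 8 * τ + 2 * τ ^ 2) / (τ * √(1 - τ ^ 2)) := by
        gcongr
        exact arccos_le_rational_mul_sqrt hτ.1.le hτ.2.le
    _ = (8 + 7 * τ) / (τ * (5 + 8 * τ + 2 * τ ^ 2)) := by field_simp

end ShrinkageWeight

/-! ### Gaussian mixture representation of the posterior -/

lemma phiN_pos (x : ℝ) : 0 < phiN x := by
  unfold phiN
  positivity

lemma phiN_eq_gaussianPDFReal : phiN = gaussianPDFReal 0 1 := by
  ext x
  simp [phiN, gaussianPDFReal]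

lemma phiN_mul_exp_sq_div_two (y : ℝ) : phiN y * exp (y ^ 2 / 2) = (√(2 * π))⁻¹ := by
  rw [phiN, mul_assoc, ← exp_add, neg_div, neg_add_cancel, exp_zero, mul_one]

section GaussianMoments

variable (m : ℝ) (v : ℝ≥0)

lemma integrable_pow_gaussianReal (k : ℕ) : Integrable (fun θ => θ ^ k) (gaussianReal m v) :=
  integrable_pow_of_mem_interior_integrableExpSet (X := id)
    (by simp [integrableExpSet_id_gaussianReal]) k

lemma integral_sq_gaussianReal : ∫ θ, θ ^ 2 ∂gaussianReal m v = m ^ 2 + v := by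
  have h := variance_eq_sub (memLp_id_gaussianReal (μ := m) (v := v) 2)
  simp only [variance_id_gaussianReal, Pi.pow_apply, id_eq, integral_id_gaussianReal] at h
  linarith

open Polynomial in
lemma iteratedDeriv_exp_quadratic (a b : ℝ) (k : ℕ) :
    iteratedDeriv k (fun t => exp (a * t + b * t ^ 2 / 2)) = fun t =>
      ((fun P : ℝ[X] => .C b * P.derivative + .X * P)^[k] 1).eval (a + b * t) *
        exp (a * t + b * t ^ 2 / 2) := by
  induction k with
  | zero => simp
  | succ k ih =>
    rw [iteratedDeriv_succ, ih, Function.iterate_succ_apply']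
    set P := (fun P : ℝ[X] => .C b * P.derivative + .X * P)^[k] 1
    ext t
    have h_linear : HasDerivAt (fun t => a + b * t) b t := by
      simpa using ((hasDerivAt_id t).const_mul b).const_add a
    have h_exponent : HasDerivAt (fun t => a * t + b * t ^ 2 / 2) (a + b * t) t := by
      refine (((hasDerivAt_id t).const_mul a).add
        (((hasDerivAt_pow 2 t).const_mul b).div_const 2)).congr_deriv ?_
      push_cast
      ring
    have h_poly : HasDerivAt (fun t => P.eval (a + b * t)) (P.derivative.eval (a + b * t) * b) t :=
      HasDerivAt.comp t (h₂ := fun u => P.eval u) (P.hasDerivAt _) h_linear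
    rw [(h_poly.fun_mul h_exponent.exp).deriv]
    simp only [Polynomial.eval_add, Polynomial.eval_mul, Polynomial.eval_C, Polynomial.eval_X]
    ring

lemma integral_pow_four_gaussianReal :
    ∫ θ, θ ^ 4 ∂gaussianReal m v = m ^ 4 + 6 * m ^ 2 * v + 3 * v ^ 2 := by
  have h := iteratedDeriv_mgf_zero (X := id) (μ := gaussianReal m v)
    (by simp [integrableExpSet_id_gaussianReal]) 4
  rw [mgf_id_gaussianReal, iteratedDeriv_exp_quadratic] at h
  simp only [Pi.pow_apply, id_eq] at h
  rw [← h]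
  simp only [Function.iterate_succ_apply', Function.iterate_zero_apply, Polynomial.derivative_add,
    Polynomial.derivative_mul, Polynomial.derivative_C, Polynomial.derivative_X,
    Polynomial.derivative_one, Polynomial.derivative_zero, Polynomial.eval_add,
    Polynomial.eval_mul, Polynomial.eval_C, Polynomial.eval_X, Polynomial.eval_one,
    Polynomial.eval_zero, mul_zero, zero_pow two_ne_zero, zero_div, add_zero, exp_zero]
  ring

end GaussianMoments

-- With `x = sin (arctan s)`, observing `y` with unit variance updates `N(0, s²)` to `N(x² y, x²)`.
lemma phiN_sub_mul_phiN_div (y θ : ℝ) {s : ℝ} (hs : 0 < s) :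
    phiN (y - θ) * (phiN (θ / s) / s) =
      cos (arctan s) * (phiN y * exp (sin (arctan s) ^ 2 * y ^ 2 / 2) *
        gaussianPDFReal (sin (arctan s) ^ 2 * y) (sin (arctan s) ^ 2).toNNReal θ) := by
  set x := sin (arctan s)
  set c := cos (arctan s)
  have hx : 0 < x := sin_arctan_pos.2 hs
  have hc : 0 < c := cos_arctan_pos s
  have h_tan : s = x / c := by rw [← tan_eq_sin_div_cos, tan_arctan]
  have h_sq : c ^ 2 = 1 - x ^ 2 := by rw [eq_sub_iff_add_eq', sin_sq_add_cos_sq]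
  have h_exp : exp (-(y - θ) ^ 2 / 2) * exp (-(θ / s) ^ 2 / 2) =
      exp (-y ^ 2 / 2) * exp (x ^ 2 * y ^ 2 / 2) * exp (-(θ - x ^ 2 * y) ^ 2 / (2 * x ^ 2)) := by
    rw [← exp_add, ← exp_add, ← exp_add, h_tan]
    congr 1
    field_simp
    rw [h_sq]
    ring
  rw [gaussianPDFReal, coe_toNNReal _ (sq_nonneg x), sqrt_mul (by positivity) (x ^ 2),
    sqrt_sq hx.le]
  calc phiN (y - θ) * (phiN (θ / s) / s)
      = (√(2 * π))⁻¹ ^ 2 * (exp (-(y - θ) ^ 2 / 2) * exp (-(θ / s) ^ 2 / 2)) / s := by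
        simp only [phiN]
        ring
    _ = _ := by
        rw [h_exp, h_tan]
        simp only [phiN]
        field_simp

/-- The joint density of the parameter `θ` and of `x = √κ` given `y`, up to a constant. -/
def mixtureDens (τ y θ x : ℝ) : ℝ :=
  gaussianPDFReal (x ^ 2 * y) (x ^ 2).toNNReal θ * (exp (x ^ 2 * y ^ 2 / 2) * shrinkageWeight τ x)

lemma postDens_eq_integral {τ : ℝ} (hτ : 0 < τ) (y θ : ℝ) :
    postDens τ y θ = 2 * τ / π * phiN y * ∫ x in (0 : ℝ)..1, mixtureDens τ y θ x := by
  rw [postDens, gHS, integral_Ioi_halfCauchy_comp_mul hτ (fun s => phiN (θ / s) / s),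
    ← integral_Ioi_cos_arctan_mul_comp_sin_arctan, mul_left_comm, mul_assoc,
    ← integral_const_mul (phiN (y - θ)), ← integral_const_mul (phiN y)]
  congr 1
  refine setIntegral_congr_fun measurableSet_Ioi fun s hs => ?_
  rw [mixtureDens, shrinkageWeight_sin_arctan, ← mul_div_assoc, phiN_sub_mul_phiN_div y θ hs]
  have : 1 + s ^ 2 ≠ 0 := by positivity
  field_simp

lemma shrinkageWeight_le {τ x : ℝ} (hτ : τ ∈ Ioo 0 1) : shrinkageWeight τ x ≤ (τ ^ 2)⁻¹ := by
  have h_sq : 0 ≤ (1 - τ ^ 2) * x ^ 2 := by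
    have : 0 ≤ 1 - τ ^ 2 := by nlinarith [hτ.1, hτ.2]
    positivity
  have := hτ.1
  unfold shrinkageWeight
  gcongr
  linarith

section Mixture

variable {τ y C : ℝ} {q : ℝ → ℝ}

lemma mixtureDens_nonneg (hτ : τ ∈ Ioo 0 1) (y θ x : ℝ) : 0 ≤ mixtureDens τ y θ x :=
  mul_nonneg (gaussianPDFReal_nonneg _ _ _)
    (mul_nonneg (exp_pos _).le (shrinkageWeight_pos hτ x).le)

lemma integral_mul_mixtureDens {x : ℝ} (hx : x ≠ 0) (τ y : ℝ) (q : ℝ → ℝ) :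
    ∫ θ, q θ * mixtureDens τ y θ x =
      (∫ θ, q θ ∂gaussianReal (x ^ 2 * y) (x ^ 2).toNNReal) *
        (exp (x ^ 2 * y ^ 2 / 2) * shrinkageWeight τ x) := by
  rw [integral_gaussianReal_eq_integral_smul (by simpa using hx), ← integral_mul_const]
  congr! 2
  rw [mixtureDens, smul_eq_mul]
  ring

lemma integrable_of_abs_le_one_add_pow_four (hq : Measurable q)
    (hC : ∀ θ, |q θ| ≤ C * (1 + θ ^ 4)) (m : ℝ) (v : ℝ≥0) : Integrable q (gaussianReal m v) :=
  (((integrable_const 1).add (integrable_pow_gaussianReal m v 4)).const_mul C).mono'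
    hq.aestronglyMeasurable (ae_of_all _ hC)

lemma integral_abs_gaussianReal_le {x : ℝ} (hC : ∀ θ, |q θ| ≤ C * (1 + θ ^ 4))
    (hx : x ∈ Icc 0 1) :
    ∫ θ, |q θ| ∂gaussianReal (x ^ 2 * y) (x ^ 2).toNNReal ≤ C * (4 + 6 * y ^ 2 + y ^ 4) := by
  have hC_nonneg : 0 ≤ C := by simpa using (abs_nonneg _).trans (hC 0)
  have h_int := (integrable_const (1 : ℝ)).add
    (integrable_pow_gaussianReal (x ^ 2 * y) (x ^ 2).toNNReal 4)
  have h_pow : ∀ k, x ^ k ≤ 1 := fun k => pow_le_one₀ hx.1 hx.2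
  calc ∫ θ, |q θ| ∂gaussianReal (x ^ 2 * y) (x ^ 2).toNNReal
      ≤ ∫ θ, C * (1 + θ ^ 4) ∂gaussianReal (x ^ 2 * y) (x ^ 2).toNNReal :=
        integral_mono_of_nonneg (ae_of_all _ fun _ => abs_nonneg _) (h_int.const_mul C)
          (ae_of_all _ hC)
    _ = C * (1 + (x ^ 8 * y ^ 4 + 6 * (x ^ 6 * y ^ 2) + 3 * x ^ 4)) := by
        rw [integral_const_mul,
          integral_add (integrable_const _) (integrable_pow_gaussianReal _ _ _),
          integral_pow_four_gaussianReal, coe_toNNReal _ (sq_nonneg x)]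
        simp only [integral_const, probReal_univ, one_smul]
        ring
    _ ≤ C * (4 + 6 * y ^ 2 + y ^ 4) := by
        refine mul_le_mul_of_nonneg_left ?_ hC_nonneg
        linarith [mul_le_of_le_one_left (by positivity : 0 ≤ y ^ 4) (h_pow 8),
          mul_le_of_le_one_left (sq_nonneg y) (h_pow 6), h_pow 4]

lemma measurable_uncurry_mul_mixtureDens (hτ : τ ∈ Ioo 0 1) (hq : Measurable q) :
    Measurable (Function.uncurry fun θ x => q θ * mixtureDens τ y θ x) := by
  have := (continuous_shrinkageWeight hτ).measurable
  have : Measurable fun z : ℝ × ℝ =>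
      gaussianPDFReal (z.2 ^ 2 * y) (z.2 ^ 2).toNNReal z.1 := by
    simp only [gaussianPDFReal_def]
    fun_prop
  simp only [mixtureDens, Function.uncurry_def]
  fun_prop

lemma integrable_mul_mixtureDens (hτ : τ ∈ Ioo 0 1) (hq : Measurable q)
    (hC : ∀ θ, |q θ| ≤ C * (1 + θ ^ 4)) :
    Integrable (Function.uncurry fun θ x => q θ * mixtureDens τ y θ x)
      (volume.prod (volume.restrict (Ioc 0 1))) := by
  have h_meas := measurable_uncurry_mul_mixtureDens (y := y) hτ hq
  rw [integrable_prod_iff' h_meas.aestronglyMeasurable]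
  constructor
  · filter_upwards [ae_restrict_mem measurableSet_Ioc] with x hx
    have h := integrable_of_abs_le_one_add_pow_four hq hC (x ^ 2 * y) (x ^ 2).toNNReal
    rw [gaussianReal_of_var_ne_zero _ (by simpa using hx.1.ne'),
      integrable_withDensity_iff_integrable_smul' (measurable_gaussianPDF _ _)
        (ae_of_all _ fun _ => gaussianPDF_lt_top)] at h
    refine (h.mul_const (exp (x ^ 2 * y ^ 2 / 2) * shrinkageWeight τ x)).congr
      (ae_of_all _ fun θ => ?_)
    simp only [toReal_gaussianPDF, smul_eq_mul, Function.uncurry_apply_pair, mixtureDens]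
    ring
  · refine Integrable.of_bound (C := C * (4 + 6 * y ^ 2 + y ^ 4) *
      (exp (y ^ 2 / 2) * (τ ^ 2)⁻¹)) ?_ ?_
    · exact (h_meas.comp measurable_swap).norm.stronglyMeasurable.integral_prod_right
        |>.aestronglyMeasurable
    filter_upwards [ae_restrict_mem measurableSet_Ioc] with x hx
    have h_sq : x ^ 2 * y ^ 2 ≤ y ^ 2 :=
      mul_le_of_le_one_left (sq_nonneg y) (pow_le_one₀ hx.1.le hx.2)
    simp only [Function.uncurry_apply_pair, norm_eq_abs, abs_mul,
      abs_of_nonneg (mixtureDens_nonneg hτ _ _ _)]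
    rw [integral_mul_mixtureDens hx.1.ne' τ y fun θ => |q θ|, abs_mul, abs_mul, abs_exp,
      abs_of_pos (shrinkageWeight_pos hτ x), abs_of_nonneg (integral_nonneg fun _ => abs_nonneg _)]
    have h_weight : exp (x ^ 2 * y ^ 2 / 2) * shrinkageWeight τ x ≤
        exp (y ^ 2 / 2) * (τ ^ 2)⁻¹ := by
      have := (shrinkageWeight_pos hτ x).le
      gcongr
      exact shrinkageWeight_le hτ
    have h_q := integral_abs_gaussianReal_le (y := y) hC ⟨hx.1.le, hx.2⟩
    exact mul_le_mul h_q h_weight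
      (mul_nonneg (exp_pos _).le (shrinkageWeight_pos hτ x).le)
      ((integral_nonneg fun _ => abs_nonneg _).trans h_q)

lemma integrable_mul_postDens (hτ : τ ∈ Ioo 0 1) (y : ℝ) (hq : Measurable q)
    (hC : ∀ θ, |q θ| ≤ C * (1 + θ ^ 4)) : Integrable fun θ => q θ * postDens τ y θ := by
  refine ((integrable_mul_mixtureDens (y := y) hτ hq hC).integral_prod_left.const_mul
    (2 * τ / π * phiN y)).congr (ae_of_all _ fun θ => ?_)
  simp only [Function.uncurry_apply_pair]
  rw [integral_const_mul, ← intervalIntegral.integral_of_le zero_le_one,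
    postDens_eq_integral hτ.1, mul_left_comm]

lemma integral_mul_postDens (hτ : τ ∈ Ioo 0 1) (y : ℝ) (hq : Measurable q)
    (hC : ∀ θ, |q θ| ≤ C * (1 + θ ^ 4)) :
    ∫ θ, q θ * postDens τ y θ = 2 * τ / π * phiN y * ∫ x in (0 : ℝ)..1,
      (∫ θ, q θ ∂gaussianReal (x ^ 2 * y) (x ^ 2).toNNReal) *
        (exp (x ^ 2 * y ^ 2 / 2) * shrinkageWeight τ x) := by
  calc ∫ θ, q θ * postDens τ y θ
      = 2 * τ / π * phiN y * ∫ θ, ∫ x in Ioc (0 : ℝ) 1, q θ * mixtureDens τ y θ x := by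
        rw [← integral_const_mul]
        refine integral_congr_ae (ae_of_all _ fun θ => ?_)
        simp only
        rw [integral_const_mul, ← intervalIntegral.integral_of_le zero_le_one,
          postDens_eq_integral hτ.1, mul_left_comm]
    _ = 2 * τ / π * phiN y * ∫ x in Ioc (0 : ℝ) 1, ∫ θ, q θ * mixtureDens τ y θ x := by
        rw [integral_integral_swap (integrable_mul_mixtureDens hτ hq hC)]
    _ = _ := by
        rw [intervalIntegral.integral_of_le zero_le_one]
        congr 1
        exact setIntegral_congr_fun measurableSet_Ioc fun x hx =>
          integral_mul_mixtureDens hx.1.ne' τ y q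

end Mixture

/-! ### Posterior moments of a single coordinate -/

lemma abs_pow_le_one_add_pow_four (θ : ℝ) {k : ℕ} (hk : k ≤ 4) :
    |θ ^ k| ≤ 1 * (1 + θ ^ 4) := by
  rw [abs_pow, one_mul, ← Even.pow_abs (by decide : Even 4) θ]
  rcases le_total |θ| 1 with h | h
  · linarith [pow_le_one₀ (n := k) (abs_nonneg θ) h, pow_nonneg (abs_nonneg θ) 4]
  · linarith [pow_le_pow_right₀ h hk]

lemma gHS_nonneg {τ : ℝ} (hτ : 0 ≤ τ) (θ : ℝ) : 0 ≤ gHS τ θ := by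
  refine setIntegral_nonneg measurableSet_Ioi fun l hl => ?_
  have := phiN_pos (θ / (l * τ))
  have : 0 < l := hl
  positivity

lemma postDens_nonneg {τ : ℝ} (hτ : 0 ≤ τ) (y θ : ℝ) : 0 ≤ postDens τ y θ :=
  mul_nonneg (phiN_pos _).le (gHS_nonneg hτ θ)

section PosteriorMoments

variable {τ : ℝ}

lemma continuous_shrinkageMoment_integrand (hτ : τ ∈ Ioo 0 1) (k : ℕ) :
    Continuous fun z : ℝ × ℝ =>
      z.2 ^ k * exp (z.2 ^ 2 * z.1 ^ 2 / 2) * shrinkageWeight τ z.2 := by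
  have := continuous_shrinkageWeight hτ
  fun_prop

lemma intervalIntegrable_shrinkageMoment (hτ : τ ∈ Ioo 0 1) (y : ℝ) (k : ℕ) :
    IntervalIntegrable (fun x => x ^ k * exp (x ^ 2 * y ^ 2 / 2) * shrinkageWeight τ x)
      volume 0 1 :=
  ((continuous_shrinkageMoment_integrand hτ k).comp
    (by fun_prop : Continuous fun x => (y, x))).intervalIntegrable 0 1

lemma continuous_shrinkageMoment (hτ : τ ∈ Ioo 0 1) (k : ℕ) :
    Continuous fun y => shrinkageMoment τ y k :=
  intervalIntegral.continuous_parametric_intervalIntegral_of_continuous'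
    (continuous_shrinkageMoment_integrand hτ k) 0 1

lemma integral_shrinkageWeight_le_shrinkageMoment_zero (hτ : τ ∈ Ioo 0 1) (y : ℝ) :
    ∫ x in (0 : ℝ)..1, shrinkageWeight τ x ≤ shrinkageMoment τ y 0 := by
  refine intervalIntegral.integral_mono_on zero_le_one
    ((continuous_shrinkageWeight hτ).intervalIntegrable 0 1)
    (intervalIntegrable_shrinkageMoment hτ y 0) fun x _ => ?_
  rw [pow_zero, one_mul]
  exact le_mul_of_one_le_left (shrinkageWeight_pos hτ x).le (one_le_exp (by positivity))

lemma one_div_le_shrinkageMoment_zero (hτ : τ ∈ Ioo 0 1) (y : ℝ) :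
    1 / τ ≤ shrinkageMoment τ y 0 :=
  (one_div_le_integral_shrinkageWeight hτ).trans
    (integral_shrinkageWeight_le_shrinkageMoment_zero hτ y)

lemma shrinkageMoment_zero_pos (hτ : τ ∈ Ioo 0 1) (y : ℝ) : 0 < shrinkageMoment τ y 0 :=
  (one_div_pos.2 hτ.1).trans_le (one_div_le_shrinkageMoment_zero hτ y)

lemma integrable_pow_mul_postDens (hτ : τ ∈ Ioo 0 1) (y : ℝ) {k : ℕ} (hk : k ≤ 4) :
    Integrable fun θ => θ ^ k * postDens τ y θ :=
  integrable_mul_postDens hτ y (by fun_prop) fun θ => abs_pow_le_one_add_pow_four θ hk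

lemma integrable_postDens (hτ : τ ∈ Ioo 0 1) (y : ℝ) : Integrable (postDens τ y) := by
  simpa using integrable_pow_mul_postDens hτ y (Nat.zero_le 4)

lemma integral_pow_mul_postDens (hτ : τ ∈ Ioo 0 1) (y : ℝ) {k : ℕ} (hk : k ≤ 4) :
    ∫ θ, θ ^ k * postDens τ y θ = 2 * τ / π * phiN y * ∫ x in (0 : ℝ)..1,
      (∫ θ, θ ^ k ∂gaussianReal (x ^ 2 * y) (x ^ 2).toNNReal) *
        (exp (x ^ 2 * y ^ 2 / 2) * shrinkageWeight τ x) :=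
  integral_mul_postDens hτ y (by fun_prop) fun θ => abs_pow_le_one_add_pow_four θ hk

lemma margDens_eq (hτ : τ ∈ Ioo 0 1) (y : ℝ) :
    margDens τ y = 2 * τ / π * phiN y * shrinkageMoment τ y 0 := by
  simpa [margDens, shrinkageMoment] using integral_pow_mul_postDens hτ y (Nat.zero_le 4)

lemma margDens_pos (hτ : τ ∈ Ioo 0 1) (y : ℝ) : 0 < margDens τ y := by
  have := phiN_pos y
  have := shrinkageMoment_zero_pos hτ y
  have := hτ.1
  rw [margDens_eq hτ]
  positivity

lemma integral_id_mul_postDens (hτ : τ ∈ Ioo 0 1) (y : ℝ) :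
    ∫ θ, θ * postDens τ y θ = 2 * τ / π * phiN y * (y * shrinkageMoment τ y 2) := by
  have h := integral_pow_mul_postDens hτ y (by norm_num : 1 ≤ 4)
  simp only [pow_one, integral_id_gaussianReal] at h
  rw [h]
  congr 1
  rw [shrinkageMoment, ← intervalIntegral.integral_const_mul]
  congr! 2
  ring

lemma integral_sq_mul_postDens (hτ : τ ∈ Ioo 0 1) (y : ℝ) :
    ∫ θ, θ ^ 2 * postDens τ y θ = 2 * τ / π * phiN y *
      (shrinkageMoment τ y 2 + y ^ 2 * shrinkageMoment τ y 4) := by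
  have h := integral_pow_mul_postDens hτ y (by norm_num : 2 ≤ 4)
  simp only [integral_sq_gaussianReal, coe_toNNReal _ (sq_nonneg _)] at h
  have h_int := intervalIntegrable_shrinkageMoment hτ y
  rw [h]
  congr 1
  rw [shrinkageMoment, shrinkageMoment, ← intervalIntegral.integral_const_mul,
    ← intervalIntegral.integral_add (h_int 2) ((h_int 4).const_mul _)]
  congr! 2 with x
  ring

lemma integral_pow_four_mul_postDens (hτ : τ ∈ Ioo 0 1) (y : ℝ) :
    ∫ θ, θ ^ 4 * postDens τ y θ = 2 * τ / π * phiN y *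
      (y ^ 4 * shrinkageMoment τ y 8 + 6 * y ^ 2 * shrinkageMoment τ y 6 +
        3 * shrinkageMoment τ y 4) := by
  have h := integral_pow_mul_postDens hτ y le_rfl
  simp only [integral_pow_four_gaussianReal, coe_toNNReal _ (sq_nonneg _)] at h
  have h_int := intervalIntegrable_shrinkageMoment hτ y
  rw [h]
  congr 1
  simp only [shrinkageMoment, ← intervalIntegral.integral_const_mul]
  rw [← intervalIntegral.integral_add ((h_int 8).const_mul _) ((h_int 6).const_mul _),
    ← intervalIntegral.integral_add
      (((h_int 8).const_mul _).add ((h_int 6).const_mul _)) ((h_int 4).const_mul _)]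
  congr! 2 with x
  ring

lemma postMean_eq (hτ : τ ∈ Ioo 0 1) (y : ℝ) :
    postMean τ y = y * shrinkageMoment τ y 2 / shrinkageMoment τ y 0 := by
  have h_coef : 2 * τ / π * phiN y ≠ 0 := by
    have := phiN_pos y
    have := hτ.1
    positivity
  rw [postMean, integral_id_mul_postDens hτ, margDens_eq hτ, mul_div_mul_left _ _ h_coef]

lemma integrable_sub_pow_mul_postDens (hτ : τ ∈ Ioo 0 1) (y a : ℝ) {k : ℕ} (hk : k ≤ 4) :
    Integrable fun θ => (θ - a) ^ k * postDens τ y θ := by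
  have h_sum : (fun θ => (θ - a) ^ k * postDens τ y θ) = fun θ => ∑ j ∈ Finset.range (k + 1),
      (-a) ^ (k - j) * (k.choose j) * (θ ^ j * postDens τ y θ) := by
    ext θ
    rw [sub_eq_add_neg, add_pow, Finset.sum_mul]
    exact Finset.sum_congr rfl fun j _ => by ring
  rw [h_sum]
  exact integrable_finsetSum _ fun j hj => (integrable_pow_mul_postDens hτ y
    ((Finset.mem_range_succ_iff.1 hj).trans hk)).const_mul _

lemma postVar_eq (hτ : τ ∈ Ioo 0 1) (y : ℝ) :
    postVar τ y = (shrinkageMoment τ y 2 + y ^ 2 * shrinkageMoment τ y 4) / shrinkageMoment τ y 0 -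
      (y * shrinkageMoment τ y 2 / shrinkageMoment τ y 0) ^ 2 := by
  have h_id : Integrable fun θ => θ * postDens τ y θ := by
    simpa using integrable_pow_mul_postDens hτ y (by norm_num : 1 ≤ 4)
  have h_sq := integrable_pow_mul_postDens hτ y (by norm_num : 2 ≤ 4)
  have h_diff : Integrable fun θ => θ ^ 2 * postDens τ y θ -
      2 * postMean τ y * (θ * postDens τ y θ) := h_sq.sub (h_id.const_mul _)
  have h_expand : ∀ θ, (θ - postMean τ y) ^ 2 * postDens τ y θ = θ ^ 2 * postDens τ y θ -
      2 * postMean τ y * (θ * postDens τ y θ) + postMean τ y ^ 2 * postDens τ y θ := fun θ => by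
    ring
  have h_marg : ∫ θ, postDens τ y θ = margDens τ y := rfl
  simp_rw [postVar, h_expand]
  rw [integral_add h_diff ((integrable_postDens hτ y).const_mul _),
    integral_sub h_sq (h_id.const_mul _), integral_const_mul, integral_const_mul, h_marg,
    integral_sq_mul_postDens hτ, integral_id_mul_postDens hτ, margDens_eq hτ, postMean_eq hτ]
  have := (shrinkageMoment_zero_pos hτ y).ne'
  have := (phiN_pos y).ne'
  have := hτ.1.ne'
  field_simp
  ring

lemma continuous_postVar (hτ : τ ∈ Ioo 0 1) : Continuous (postVar τ) := by
  have h := continuous_shrinkageMoment hτ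
  have h_ne := fun y => (shrinkageMoment_zero_pos hτ y).ne'
  rw [funext (postVar_eq hτ)]
  exact (((h 2).add ((continuous_pow 2).mul (h 4))).div (h 0) h_ne).sub
    (((continuous_id.mul (h 2)).div (h 0) h_ne).pow 2)

lemma postVar_nonneg (hτ : 0 ≤ τ) (y : ℝ) : 0 ≤ postVar τ y :=
  div_nonneg (integral_nonneg fun _ => mul_nonneg (sq_nonneg _) (postDens_nonneg hτ y _))
    (integral_nonneg fun _ => postDens_nonneg hτ y _)

end PosteriorMoments

/-! ### Bounds on the posterior variance and fourth moment -/

-- Chebyshev's association inequality: integrate `(f x - f y) * (g x - g y) ≥ 0`.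
lemma integral_mul_integral_le_of_monotoneOn {a b : ℝ} {f g w : ℝ → ℝ} (hab : a ≤ b)
    (hf : Continuous f) (hg : Continuous g) (hw : Continuous w)
    (hf_mono : MonotoneOn f (Icc a b)) (hg_mono : MonotoneOn g (Icc a b))
    (hw_nonneg : ∀ x ∈ Icc a b, 0 ≤ w x) :
    (∫ x in a..b, f x * w x) * (∫ x in a..b, g x * w x) ≤
      (∫ x in a..b, w x) * ∫ x in a..b, f x * g x * w x := by
  have h_int : ∀ {h : ℝ → ℝ}, Continuous h → IntervalIntegrable h volume a b :=
    fun h => h.intervalIntegrable a b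
  set F := ∫ x in a..b, f x * w x
  set G := ∫ x in a..b, g x * w x
  set W := ∫ x in a..b, w x
  set P := ∫ x in a..b, f x * g x * w x
  have h_inner : ∀ y, ∫ x in a..b, (f x - f y) * (g x - g y) * w x =
      P - g y * F - f y * G + f y * g y * W := fun y => by
    simp only [F, G, W, P, ← intervalIntegral.integral_const_mul]
    rw [← intervalIntegral.integral_sub (h_int (by fun_prop)) (h_int (by fun_prop)),
      ← intervalIntegral.integral_sub (h_int (by fun_prop)) (h_int (by fun_prop)),
      ← intervalIntegral.integral_add (h_int (by fun_prop)) (h_int (by fun_prop))]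
    congr! 2 with x
    ring
  have h_outer : ∫ y in a..b, (P - g y * F - f y * G + f y * g y * W) * w y =
      2 * (W * P - F * G) := by
    have h_expand : ∀ y, (P - g y * F - f y * G + f y * g y * W) * w y =
        P * w y - F * (g y * w y) - G * (f y * w y) + W * (f y * g y * w y) := fun y => by ring
    simp_rw [h_expand]
    rw [intervalIntegral.integral_add (h_int (by fun_prop)) (h_int (by fun_prop)),
      intervalIntegral.integral_sub (h_int (by fun_prop)) (h_int (by fun_prop)),
      intervalIntegral.integral_sub (h_int (by fun_prop)) (h_int (by fun_prop))]
    simp only [intervalIntegral.integral_const_mul]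
    ring
  have h_nonneg : 0 ≤ ∫ y in a..b, (P - g y * F - f y * G + f y * g y * W) * w y := by
    refine intervalIntegral.integral_nonneg hab fun y hy => mul_nonneg ?_ (hw_nonneg y hy)
    rw [← h_inner]
    exact intervalIntegral.integral_nonneg hab fun x hx => mul_nonneg
      ((hf_mono.monovaryOn hg_mono).sub_mul_sub_nonneg hy hx) (hw_nonneg x hx)
  linarith

lemma monotoneOn_exp_sq_mul (y : ℝ) :
    MonotoneOn (fun x => exp (x ^ 2 * y ^ 2 / 2)) (Icc 0 1) := fun a ha b _ hab => by
  have h_sq : a ^ 2 ≤ b ^ 2 := pow_le_pow_left₀ ha.1 hab 2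
  exact exp_le_exp.2 (by gcongr)

section VarianceBounds

variable {τ : ℝ}

lemma continuous_exp_sq_mul (y : ℝ) : Continuous fun x => exp (x ^ 2 * y ^ 2 / 2) := by
  fun_prop

lemma rational_mul_shrinkageMoment_zero_le (hτ : τ ∈ Ioo 0 1) (y : ℝ) :
    5 * τ / (8 + 7 * τ) * shrinkageMoment τ y 0 ≤ shrinkageMoment τ y 2 := by
  set D := ∫ x in (0 : ℝ)..1, shrinkageWeight τ x
  set M := ∫ x in (0 : ℝ)..1, x ^ 2 * shrinkageWeight τ x
  have h_assoc : M * shrinkageMoment τ y 0 ≤ D * shrinkageMoment τ y 2 := by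
    simpa [shrinkageMoment] using integral_mul_integral_le_of_monotoneOn zero_le_one
      (continuous_pow 2) (continuous_exp_sq_mul y) (continuous_shrinkageWeight hτ)
      (pow_left_monotoneOn.mono fun _ hx => hx.1) (monotoneOn_exp_sq_mul y)
      fun x _ => (shrinkageWeight_pos hτ x).le
  have h_τ := hτ.1
  have hD_pos : 0 < D := (one_div_pos.2 h_τ).trans_le (one_div_le_integral_shrinkageWeight hτ)
  have h_D : D * (τ * (5 + 8 * τ + 2 * τ ^ 2)) ≤ 8 + 7 * τ :=
    (le_div_iff₀ (by positivity)).1 (integral_shrinkageWeight_le_rational hτ)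
  have h_M : (1 - τ ^ 2) * M = 1 - τ ^ 2 * D := integral_sq_mul_shrinkageWeight hτ
  have h_ratio : 5 * τ / (8 + 7 * τ) * D ≤ M := by
    rw [div_mul_eq_mul_div, div_le_iff₀ (by positivity)]
    have h_sq : 0 < 1 - τ ^ 2 := by nlinarith [hτ.2]
    refine le_of_mul_le_mul_left ?_ h_sq
    calc (1 - τ ^ 2) * (5 * τ * D)
        = D * (τ * (5 + 8 * τ + 2 * τ ^ 2)) - (8 * τ ^ 2 + 7 * τ ^ 3) * D := by ring
      _ ≤ 8 + 7 * τ - (8 * τ ^ 2 + 7 * τ ^ 3) * D := sub_le_sub_right h_D _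
      _ = (1 - τ ^ 2 * D) * (8 + 7 * τ) := by ring
      _ = (1 - τ ^ 2) * (M * (8 + 7 * τ)) := by rw [← h_M, mul_assoc]
  refine le_of_mul_le_mul_left ?_ hD_pos
  calc D * (5 * τ / (8 + 7 * τ) * shrinkageMoment τ y 0)
      = 5 * τ / (8 + 7 * τ) * D * shrinkageMoment τ y 0 := by ring
    _ ≤ M * shrinkageMoment τ y 0 := by
        gcongr
        exact (shrinkageMoment_zero_pos hτ y).le
    _ ≤ D * shrinkageMoment τ y 2 := h_assoc

lemma shrinkageMoment_two_sq_le (hτ : τ ∈ Ioo 0 1) (y : ℝ) :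
    shrinkageMoment τ y 2 ^ 2 ≤ shrinkageMoment τ y 0 * shrinkageMoment τ y 4 := by
  have h_mono := pow_left_monotoneOn (M₀ := ℝ) (n := 2) |>.mono fun x (hx : x ∈ Icc 0 1) => hx.1
  have h_weight : Continuous fun x => exp (x ^ 2 * y ^ 2 / 2) * shrinkageWeight τ x :=
    (continuous_exp_sq_mul y).mul (continuous_shrinkageWeight hτ)
  have h := integral_mul_integral_le_of_monotoneOn zero_le_one (continuous_pow 2)
    (continuous_pow 2) h_weight h_mono h_mono
    fun x _ => mul_nonneg (exp_pos _).le (shrinkageWeight_pos hτ x).le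
  rw [sq]
  simpa [shrinkageMoment, ← mul_assoc, ← pow_add] using h

lemma rational_le_postVar (hτ : τ ∈ Ioo 0 1) (y : ℝ) : 5 * τ / (8 + 7 * τ) ≤ postVar τ y := by
  have h_pos := shrinkageMoment_zero_pos hτ y
  have h_sq := shrinkageMoment_two_sq_le hτ y
  have h_excess : (y * shrinkageMoment τ y 2 / shrinkageMoment τ y 0) ^ 2 ≤
      y ^ 2 * shrinkageMoment τ y 4 / shrinkageMoment τ y 0 := by
    rw [div_pow, mul_pow, div_le_div_iff₀ (by positivity) h_pos]
    nlinarith [mul_le_mul_of_nonneg_left h_sq (by positivity : 0 ≤ y ^ 2 * shrinkageMoment τ y 0)]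
  calc 5 * τ / (8 + 7 * τ)
      ≤ shrinkageMoment τ y 2 / shrinkageMoment τ y 0 := by
        rw [le_div_iff₀ h_pos]
        exact rational_mul_shrinkageMoment_zero_le hτ y
    _ ≤ postVar τ y := by
        rw [postVar_eq hτ, add_div]
        linarith

lemma integral_one_add_sq_mul_exp (y : ℝ) :
    ∫ x in (0 : ℝ)..1, (1 + y ^ 2 * x ^ 2) * exp (x ^ 2 * y ^ 2 / 2) = exp (y ^ 2 / 2) := by
  have h_deriv : ∀ x, HasDerivAt (fun x => x * exp (x ^ 2 * y ^ 2 / 2))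
      ((1 + y ^ 2 * x ^ 2) * exp (x ^ 2 * y ^ 2 / 2)) x := fun x => by
    refine ((hasDerivAt_id x).mul
      (((hasDerivAt_pow 2 x).mul_const (y ^ 2)).div_const 2).exp).congr_deriv ?_
    push_cast
    simp only [id_eq]
    ring
  rw [intervalIntegral.integral_eq_sub_of_hasDerivAt (fun x _ => h_deriv x)
    (by apply Continuous.intervalIntegrable; fun_prop)]
  simp

lemma integral_sq_mul_id_mul_exp (y : ℝ) :
    ∫ x in (0 : ℝ)..1, y ^ 2 * x * exp (x ^ 2 * y ^ 2 / 2) = exp (y ^ 2 / 2) - 1 := by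
  have h_deriv : ∀ x, HasDerivAt (fun x => exp (x ^ 2 * y ^ 2 / 2))
      (y ^ 2 * x * exp (x ^ 2 * y ^ 2 / 2)) x := fun x => by
    refine (((hasDerivAt_pow 2 x).mul_const (y ^ 2)).div_const 2).exp.congr_deriv ?_
    push_cast
    ring
  rw [intervalIntegral.integral_eq_sub_of_hasDerivAt (fun x _ => h_deriv x)
    (by apply Continuous.intervalIntegrable; fun_prop)]
  simp

lemma integral_exp_sq_mul_le (y : ℝ) :
    ∫ x in (0 : ℝ)..1, exp (x ^ 2 * y ^ 2 / 2) ≤ (2 + exp (y ^ 2 / 2)) / 3 := by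
  have h_chord : ∀ x ∈ Icc (0 : ℝ) 1,
      exp (x ^ 2 * y ^ 2 / 2) ≤ 1 + (exp (y ^ 2 / 2) - 1) * x ^ 2 := fun x hx => by
    have h := convexOn_exp.2 (mem_univ 0) (mem_univ (y ^ 2 / 2))
      (sub_nonneg.2 (pow_le_one₀ (n := 2) hx.1 hx.2)) (sq_nonneg x) (sub_add_cancel 1 (x ^ 2))
    simp only [smul_eq_mul, mul_zero, zero_add, exp_zero, mul_one, ← mul_div_assoc] at h
    linarith
  calc ∫ x in (0 : ℝ)..1, exp (x ^ 2 * y ^ 2 / 2)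
      ≤ ∫ x in (0 : ℝ)..1, (1 + (exp (y ^ 2 / 2) - 1) * x ^ 2) :=
        intervalIntegral.integral_mono_on zero_le_one
          ((continuous_exp_sq_mul y).intervalIntegrable 0 1)
          (by apply Continuous.intervalIntegrable; fun_prop) h_chord
    _ = (2 + exp (y ^ 2 / 2)) / 3 := by
        rw [intervalIntegral.integral_add (by simp)
          (by apply Continuous.intervalIntegrable; fun_prop), intervalIntegral.integral_const_mul,
          integral_pow, integral_one]
        ring

lemma shrinkageMoment_add_two_le (hτ : τ ∈ Ioo 0 1) (y : ℝ) (k : ℕ) :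
    shrinkageMoment τ y (k + 2) ≤ (2 + exp (y ^ 2 / 2)) / 3 := by
  refine le_trans ?_ (integral_exp_sq_mul_le y)
  refine intervalIntegral.integral_mono_on zero_le_one
    (intervalIntegrable_shrinkageMoment hτ y (k + 2))
    ((continuous_exp_sq_mul y).intervalIntegrable 0 1) fun x hx => ?_
  have h_pow : x ^ k ≤ 1 := pow_le_one₀ hx.1 hx.2
  have h_weight := sq_mul_shrinkageWeight_le_one hτ hx
  have h_nonneg : 0 ≤ x ^ 2 * shrinkageWeight τ x :=
    mul_nonneg (sq_nonneg x) (shrinkageWeight_pos hτ x).le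
  calc x ^ (k + 2) * exp (x ^ 2 * y ^ 2 / 2) * shrinkageWeight τ x
      = x ^ k * (x ^ 2 * shrinkageWeight τ x) * exp (x ^ 2 * y ^ 2 / 2) := by ring
    _ ≤ 1 * 1 * exp (x ^ 2 * y ^ 2 / 2) := by gcongr
    _ = exp (x ^ 2 * y ^ 2 / 2) := by ring

lemma sq_mul_shrinkageMoment_add_three_le (hτ : τ ∈ Ioo 0 1) (y : ℝ) (k : ℕ) :
    y ^ 2 * shrinkageMoment τ y (k + 3) ≤ exp (y ^ 2 / 2) - 1 := by
  rw [← integral_sq_mul_id_mul_exp, shrinkageMoment, ← intervalIntegral.integral_const_mul]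
  refine intervalIntegral.integral_mono_on zero_le_one
    ((intervalIntegrable_shrinkageMoment hτ y (k + 3)).const_mul _)
    (by apply Continuous.intervalIntegrable; fun_prop) fun x hx => ?_
  have h_pow : x ^ k ≤ 1 := pow_le_one₀ hx.1 hx.2
  have h_weight := sq_mul_shrinkageWeight_le_one hτ hx
  have h_nonneg : 0 ≤ x ^ 2 * shrinkageWeight τ x :=
    mul_nonneg (sq_nonneg x) (shrinkageWeight_pos hτ x).le
  have h_x := hx.1
  calc y ^ 2 * (x ^ (k + 3) * exp (x ^ 2 * y ^ 2 / 2) * shrinkageWeight τ x)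
      = x ^ k * (x ^ 2 * shrinkageWeight τ x) * (y ^ 2 * x * exp (x ^ 2 * y ^ 2 / 2)) := by ring
    _ ≤ 1 * 1 * (y ^ 2 * x * exp (x ^ 2 * y ^ 2 / 2)) := by gcongr
    _ = y ^ 2 * x * exp (x ^ 2 * y ^ 2 / 2) := by ring

lemma shrinkageMoment_zero_le (hτ : τ ∈ Ioo 0 1) (y : ℝ) :
    shrinkageMoment τ y 0 ≤ π / 2 / τ + y ^ 2 / 2 * shrinkageMoment τ y 2 := by
  have h_weight := continuous_shrinkageWeight hτ
  have h_two := (intervalIntegrable_shrinkageMoment hτ y 2).const_mul (y ^ 2 / 2)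
  calc shrinkageMoment τ y 0
      ≤ ∫ x in (0 : ℝ)..1, (shrinkageWeight τ x +
          y ^ 2 / 2 * (x ^ 2 * exp (x ^ 2 * y ^ 2 / 2) * shrinkageWeight τ x)) := by
        refine intervalIntegral.integral_mono_on zero_le_one
          (intervalIntegrable_shrinkageMoment hτ y 0)
          ((h_weight.intervalIntegrable 0 1).add h_two) fun x _ => ?_
        have h_exp := mul_le_mul_of_nonneg_right (exp_sub_one_le_mul_exp (x ^ 2 * y ^ 2 / 2))
          (shrinkageWeight_pos hτ x).le
        linarith
    _ = (∫ x in (0 : ℝ)..1, shrinkageWeight τ x) + y ^ 2 / 2 * shrinkageMoment τ y 2 := by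
        rw [intervalIntegral.integral_add (h_weight.intervalIntegrable 0 1) h_two,
          intervalIntegral.integral_const_mul, shrinkageMoment]
    _ ≤ π / 2 / τ + y ^ 2 / 2 * shrinkageMoment τ y 2 := by
        gcongr
        exact integral_shrinkageWeight_le hτ

lemma monotoneOn_sq_mul_shrinkageWeight (hτ : τ ∈ Ioo 0 1) :
    MonotoneOn (fun x => x ^ 2 * shrinkageWeight τ x) (Icc 0 1) := fun a ha b _ hab => by
  have h_sq : a ^ 2 ≤ b ^ 2 := pow_le_pow_left₀ ha.1 hab 2
  simp only [shrinkageWeight, ← div_eq_mul_inv]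
  rw [div_le_div_iff₀ (shrinkageWeight_denom_pos hτ a) (shrinkageWeight_denom_pos hτ b)]
  nlinarith [mul_le_mul_of_nonneg_left h_sq (sq_nonneg τ)]

lemma monotoneOn_one_add_sq_mul_exp (y : ℝ) :
    MonotoneOn (fun x => (1 + y ^ 2 * x ^ 2) * exp (x ^ 2 * y ^ 2 / 2)) (Icc 0 1) :=
  fun a ha b hb hab => by
    have h_sq : a ^ 2 ≤ b ^ 2 := pow_le_pow_left₀ ha.1 hab 2
    exact mul_le_mul (by gcongr) (monotoneOn_exp_sq_mul y ha hb hab) (exp_pos _).le (by positivity)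

lemma one_sub_le_integral_sq_mul_shrinkageWeight (hτ : τ ∈ Ioo 0 1) :
    1 - π / 2 * τ ≤ ∫ x in (0 : ℝ)..1, x ^ 2 * shrinkageWeight τ x := by
  have h_nonneg : 0 ≤ ∫ x in (0 : ℝ)..1, x ^ 2 * shrinkageWeight τ x :=
    intervalIntegral.integral_nonneg zero_le_one fun x _ =>
      mul_nonneg (sq_nonneg x) (shrinkageWeight_pos hτ x).le
  have h_τ := hτ.1
  calc 1 - π / 2 * τ
      = 1 - τ ^ 2 * (π / 2 / τ) := by field_simp
    _ ≤ 1 - τ ^ 2 * ∫ x in (0 : ℝ)..1, shrinkageWeight τ x := by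
        gcongr
        exact integral_shrinkageWeight_le hτ
    _ = (1 - τ ^ 2) * ∫ x in (0 : ℝ)..1, x ^ 2 * shrinkageWeight τ x :=
        (integral_sq_mul_shrinkageWeight hτ).symm
    _ ≤ ∫ x in (0 : ℝ)..1, x ^ 2 * shrinkageWeight τ x :=
        mul_le_of_le_one_left h_nonneg (sub_le_self 1 (sq_nonneg τ))

lemma exp_mul_le_shrinkageMoment_two_add (hτ : τ ∈ Ioo 0 1) (y : ℝ) :
    exp (y ^ 2 / 2) * (1 - π / 2 * τ) ≤
      shrinkageMoment τ y 2 + y ^ 2 * shrinkageMoment τ y 4 := by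
  have := continuous_shrinkageWeight hτ
  have h_int := intervalIntegrable_shrinkageMoment hτ y
  have h_assoc := integral_mul_integral_le_of_monotoneOn zero_le_one
    (g := fun x => x ^ 2 * shrinkageWeight τ x) (w := fun _ => 1)
    (by fun_prop) (by fun_prop) continuous_const
    (monotoneOn_one_add_sq_mul_exp y) (monotoneOn_sq_mul_shrinkageWeight hτ)
    fun _ _ => zero_le_one
  simp only [mul_one, integral_one_add_sq_mul_exp, integral_one, sub_zero, one_mul] at h_assoc
  calc exp (y ^ 2 / 2) * (1 - π / 2 * τ)
      ≤ exp (y ^ 2 / 2) * ∫ x in (0 : ℝ)..1, x ^ 2 * shrinkageWeight τ x := by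
        gcongr
        exact one_sub_le_integral_sq_mul_shrinkageWeight hτ
    _ ≤ _ := h_assoc
    _ = shrinkageMoment τ y 2 + y ^ 2 * shrinkageMoment τ y 4 := by
        rw [shrinkageMoment, shrinkageMoment, ← intervalIntegral.integral_const_mul,
          ← intervalIntegral.integral_add (h_int 2) ((h_int 4).const_mul _)]
        congr! 2 with x
        ring

lemma sq_mul_div_sq_le_of_le_one_tenth (h_pos : 0 < τ) (h_le : τ ≤ 1 / 10) (y : ℝ) :
    (y * shrinkageMoment τ y 2 / shrinkageMoment τ y 0) ^ 2 ≤ exp (y ^ 2 / 2) * (2 * τ / π) *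
      (τ * y ^ 2 * (2 / (7.29 * π) * (exp (y ^ 2 / 2) + 8))) := by
  have hτ : τ ∈ Ioo 0 1 := ⟨h_pos, by linarith⟩
  have h_exp : 1 ≤ exp (y ^ 2 / 2) := one_le_exp (by positivity)
  have h_two_nonneg : 0 ≤ shrinkageMoment τ y 2 :=
    intervalIntegral.integral_nonneg zero_le_one fun x _ =>
      mul_nonneg (by positivity) (shrinkageWeight_pos hτ x).le
  have h_zero : π / 2 * 0.9 / τ ≤ shrinkageMoment τ y 0 := by
    refine le_trans ?_ ((le_integral_shrinkageWeight hτ).trans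
      (integral_shrinkageWeight_le_shrinkageMoment_zero hτ y))
    gcongr
    linarith
  calc (y * shrinkageMoment τ y 2 / shrinkageMoment τ y 0) ^ 2
      = y ^ 2 * (shrinkageMoment τ y 2 / shrinkageMoment τ y 0) ^ 2 := by ring
    _ ≤ y ^ 2 * ((2 + exp (y ^ 2 / 2)) / 3 / (π / 2 * 0.9 / τ)) ^ 2 := by
        gcongr
        · exact div_nonneg h_two_nonneg (shrinkageMoment_zero_pos hτ y).le
        · exact shrinkageMoment_add_two_le hτ y 0
    _ = y ^ 2 * (2 + exp (y ^ 2 / 2)) ^ 2 * (4 * τ ^ 2 / (7.29 * π ^ 2)) := by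
        field_simp
        ring
    _ ≤ y ^ 2 * (exp (y ^ 2 / 2) * (exp (y ^ 2 / 2) + 8)) * (4 * τ ^ 2 / (7.29 * π ^ 2)) := by
        gcongr
        nlinarith
    _ = _ := by
        field_simp
        ring

lemma exp_mul_le_shrinkageMoment_div (h_pos : 0 < τ) (h_le : τ ≤ 1 / 10) (y : ℝ) :
    exp (y ^ 2 / 2) * (2 * τ / π) *
      (1 - π / 2 * τ - τ * y ^ 2 * ((2 + exp (y ^ 2 / 2)) / (3 * π))) ≤
      (shrinkageMoment τ y 2 + y ^ 2 * shrinkageMoment τ y 4) / shrinkageMoment τ y 0 := by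
  have hτ : τ ∈ Ioo 0 1 := ⟨h_pos, by linarith⟩
  set E := exp (y ^ 2 / 2)
  have h_exp : 0 < E := exp_pos _
  have h_zero_pos := shrinkageMoment_zero_pos hτ y
  have h_zero : shrinkageMoment τ y 0 ≤ π / 2 / τ * (1 + τ * y ^ 2 * ((2 + E) / (3 * π))) := by
    have h_two := mul_le_mul_of_nonneg_left (shrinkageMoment_add_two_le hτ y 0)
      (by positivity : 0 ≤ y ^ 2 / 2)
    refine (shrinkageMoment_zero_le hτ y).trans ((add_le_add_right h_two _).trans_eq ?_)
    field_simp
    ring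
  set u := τ * y ^ 2 * ((2 + E) / (3 * π))
  have h_u : 0 ≤ u := by positivity
  have h_half : 0 ≤ 1 - π / 2 * τ := by nlinarith [pi_lt_four]
  rw [le_div_iff₀ h_zero_pos]
  refine le_trans ?_ (exp_mul_le_shrinkageMoment_two_add hτ y)
  rcases le_total (1 - π / 2 * τ - u) 0 with h | h
  · exact (mul_nonpos_of_nonpos_of_nonneg (mul_nonpos_of_nonneg_of_nonpos (by positivity) h)
      h_zero_pos.le).trans (by positivity)
  calc E * (2 * τ / π) * (1 - π / 2 * τ - u) * shrinkageMoment τ y 0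
      ≤ E * (2 * τ / π) * (1 - π / 2 * τ - u) * (π / 2 / τ * (1 + u)) := by gcongr
    _ = E * ((1 - π / 2 * τ - u) * (1 + u)) := by
        field_simp
    _ ≤ E * (1 - π / 2 * τ) := by
        gcongr
        nlinarith [mul_nonneg (by positivity : 0 ≤ π / 2 * τ) h_u]

lemma exp_mul_le_postVar_of_le_one_tenth (h_pos : 0 < τ) (h_le : τ ≤ 1 / 10) (y : ℝ) :
    exp (y ^ 2 / 2) * (2 * τ / π) *
      (1 - π / 2 * τ - τ * y ^ 2 * (exp (y ^ 2 / 2) + 5) / 5) ≤ postVar τ y := by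
  have hτ : τ ∈ Ioo 0 1 := ⟨h_pos, by linarith⟩
  set E := exp (y ^ 2 / 2)
  have h_exp : 0 < E := exp_pos _
  have h_coef : (2 + E) / (3 * π) + 2 / (7.29 * π) * (E + 8) ≤ (E + 5) / 5 := by
    have h_inv : π⁻¹ ≤ 1 / 3.14 := by
      rw [← one_div]
      exact one_div_le_one_div_of_le (by norm_num) pi_gt_d2.le
    calc (2 + E) / (3 * π) + 2 / (7.29 * π) * (E + 8)
        = ((2 + E) / 3 + 2 / 7.29 * (E + 8)) * π⁻¹ := by
          field_simp
      _ ≤ ((2 + E) / 3 + 2 / 7.29 * (E + 8)) * (1 / 3.14) := by gcongr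
      _ ≤ (E + 5) / 5 := by linarith
  have h_error := mul_le_mul_of_nonneg_left h_coef
    (by positivity : 0 ≤ E * (2 * τ / π) * (τ * y ^ 2))
  rw [postVar_eq hτ]
  linarith [exp_mul_le_shrinkageMoment_div h_pos h_le y,
    sq_mul_div_sq_le_of_le_one_tenth h_pos h_le y]

-- Jensen's `a ^ 4 ≤ E θ ^ 4` for `a = E θ`, applied to `(θ - a) ^ 4 ≤ 8 θ ^ 4 + 8 a ^ 4`; the term
-- linear in `θ - a` integrates to zero.
lemma sub_pow_four_le (a θ : ℝ) : (θ - a) ^ 4 ≤ 16 * θ ^ 4 - 32 * a ^ 3 * (θ - a) := by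
  have h_tangent : 0 ≤ (θ - a) ^ 2 * ((θ + a) ^ 2 + 2 * a ^ 2) := by positivity
  nlinarith [sq_nonneg (θ ^ 2 - a ^ 2), (by positivity : 0 ≤ (θ + a) ^ 4)]

lemma postMom4_le_integral_pow_four (hτ : τ ∈ Ioo 0 1) (y : ℝ) :
    postMom4 τ y ≤ 16 * (∫ θ, θ ^ 4 * postDens τ y θ) / margDens τ y := by
  set a := postMean τ y
  have h_four := integrable_pow_mul_postDens hτ y le_rfl
  have h_one : Integrable fun θ => (θ - a) * postDens τ y θ := by
    simpa using integrable_sub_pow_mul_postDens hτ y a (by norm_num : 1 ≤ 4)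
  have h_center : ∫ θ, (θ - a) * postDens τ y θ = 0 := by
    have h_id : Integrable fun θ => θ * postDens τ y θ := by
      simpa using integrable_pow_mul_postDens hτ y (by norm_num : 1 ≤ 4)
    simp_rw [sub_mul]
    rw [integral_sub h_id ((integrable_postDens hτ y).const_mul a), integral_const_mul]
    exact sub_eq_zero.2 (div_mul_cancel₀ _ (margDens_pos hτ y).ne').symm
  refine div_le_div_of_nonneg_right ?_ (margDens_pos hτ y).le
  calc ∫ θ, (θ - a) ^ 4 * postDens τ y θ
      ≤ ∫ θ, (16 * (θ ^ 4 * postDens τ y θ) - 32 * a ^ 3 * ((θ - a) * postDens τ y θ)) := by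
        refine integral_mono (integrable_sub_pow_mul_postDens hτ y a le_rfl)
          ((h_four.const_mul _).sub (h_one.const_mul _)) fun θ => ?_
        have := mul_le_mul_of_nonneg_right (sub_pow_four_le a θ) (postDens_nonneg hτ.1.le y θ)
        linarith
    _ = 16 * ∫ θ, θ ^ 4 * postDens τ y θ := by
        rw [integral_sub (h_four.const_mul _) (h_one.const_mul _), integral_const_mul,
          integral_const_mul, h_center, mul_zero, sub_zero]

lemma postMom4_le (hτ : τ ∈ Ioo 0 1) (y : ℝ) :
    postMom4 τ y ≤ 16 * τ * ((y ^ 2 + 9) * exp (y ^ 2 / 2)) := by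
  set E := exp (y ^ 2 / 2)
  have h_τ := hτ.1
  have h_phi := phiN_pos y
  have h_zero_pos := shrinkageMoment_zero_pos hτ y
  have h_exp : 1 ≤ E := one_le_exp (by positivity)
  have h_moment : y ^ 4 * shrinkageMoment τ y 8 + 6 * y ^ 2 * shrinkageMoment τ y 6 +
      3 * shrinkageMoment τ y 4 ≤ (y ^ 2 + 9) * E := by
    have h_eight := mul_le_mul_of_nonneg_left (sq_mul_shrinkageMoment_add_three_le hτ y 5)
      (sq_nonneg y)
    have h_six := sq_mul_shrinkageMoment_add_three_le hτ y 3
    have h_four := shrinkageMoment_add_two_le hτ y 2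
    simp only [Nat.reduceAdd] at h_eight h_six h_four
    nlinarith [sq_nonneg y]
  calc postMom4 τ y
      ≤ 16 * (∫ θ, θ ^ 4 * postDens τ y θ) / margDens τ y := postMom4_le_integral_pow_four hτ y
    _ = 16 * (y ^ 4 * shrinkageMoment τ y 8 + 6 * y ^ 2 * shrinkageMoment τ y 6 +
          3 * shrinkageMoment τ y 4) / shrinkageMoment τ y 0 := by
        rw [integral_pow_four_mul_postDens hτ, margDens_eq hτ]
        field_simp
    _ ≤ 16 * ((y ^ 2 + 9) * E) / (1 / τ) := by
        gcongr
        exact one_div_le_shrinkageMoment_zero hτ y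
    _ = 16 * τ * ((y ^ 2 + 9) * E) := by
        field_simp

end VarianceBounds

/-! ### Gaussian averages of the posterior moments -/

lemma zet_nonneg (τ : ℝ) : 0 ≤ zet τ := sqrt_nonneg _

lemma zet_eq_sqrt_two_mul (τ : ℝ) : zet τ = √2 * √(log τ⁻¹) := by
  rw [zet, one_div, sqrt_mul zero_le_two]

lemma setIntegral_Icc_exp_mul_gaussianReal {a b : ℝ} (hab : a ≤ b) (f : ℝ → ℝ) :
    ∫ y in Icc a b, exp (y ^ 2 / 2) * f y ∂gaussianReal 0 1 =
      (√(2 * π))⁻¹ * ∫ y in a..b, f y := by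
  rw [gaussianReal_of_var_ne_zero 0 one_ne_zero,
    setIntegral_withDensity_eq_setIntegral_toReal_smul (measurable_gaussianPDF 0 1)
      (ae_of_all _ fun _ => gaussianPDF_lt_top) _ measurableSet_Icc,
    intervalIntegral.integral_of_le hab, integral_Icc_eq_integral_Ioc, ← integral_const_mul]
  simp only [toReal_gaussianPDF, ← phiN_eq_gaussianPDFReal, smul_eq_mul, ← mul_assoc,
    phiN_mul_exp_sq_div_two]

lemma integral_sq_mul_exp_sq_le {t : ℝ} (ht : 0 ≤ t) :
    ∫ y in -t..t, y ^ 2 * exp (y ^ 2 / 2) ≤ 2 * t * (exp (t ^ 2 / 2) - 1) := by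
  have h_deriv : ∀ y, HasDerivAt (fun y => y * exp (y ^ 2 / 2))
      (y ^ 2 * exp (y ^ 2 / 2) + exp (y ^ 2 / 2)) y := fun y => by
    refine ((hasDerivAt_id y).mul ((hasDerivAt_pow 2 y).div_const 2).exp).congr_deriv ?_
    push_cast
    simp only [id_eq]
    ring
  have h_int : ∀ {f : ℝ → ℝ}, Continuous f → IntervalIntegrable f volume (-t) t :=
    fun h => h.intervalIntegrable (-t) t
  have h_parts : (∫ y in -t..t, y ^ 2 * exp (y ^ 2 / 2)) + ∫ y in -t..t, exp (y ^ 2 / 2) =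
      2 * t * exp (t ^ 2 / 2) := by
    rw [← intervalIntegral.integral_add (h_int (by fun_prop)) (h_int (by fun_prop)),
      intervalIntegral.integral_eq_sub_of_hasDerivAt (fun y _ => h_deriv y) (h_int (by fun_prop)),
      neg_sq]
    ring
  have h_one : 2 * t ≤ ∫ y in -t..t, exp (y ^ 2 / 2) := by
    calc 2 * t = ∫ _ in -t..t, (1 : ℝ) := by
          rw [integral_one]
          ring
      _ ≤ ∫ y in -t..t, exp (y ^ 2 / 2) :=
          intervalIntegral.integral_mono_on (neg_le_self ht) (h_int continuous_const)
            (h_int (by fun_prop)) fun y _ => one_le_exp (by positivity)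
  linarith

lemma le_gaussianReal_Icc {T : ℝ} (hT : 0 < T) :
    1 - 1 / T ^ 2 ≤ (gaussianReal 0 1).real (Icc (-T) T) := by
  have h_tail : (gaussianReal 0 1).real (Icc (-T) T)ᶜ ≤ 1 / T ^ 2 := by
    have h_chebyshev := meas_ge_le_variance_div_sq (memLp_id_gaussianReal (μ := 0) (v := 1) 2) hT
    simp only [variance_id_gaussianReal, id_eq, integral_id_gaussianReal, sub_zero,
      NNReal.coe_one] at h_chebyshev
    refine ENNReal.toReal_le_of_le_ofReal (by positivity) ((measure_mono fun y hy => ?_).trans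
      h_chebyshev)
    rw [mem_compl_iff, mem_Icc, ← abs_le, not_le] at hy
    exact hy.le
  linarith [probReal_compl_eq_one_sub (μ := gaussianReal 0 1)
    (measurableSet_Icc (a := -T) (b := T))]

section GaussianAverages

variable {τ T : ℝ}

lemma integrableOn_postVar (hτ : τ ∈ Ioo 0 1) (a b : ℝ) :
    IntegrableOn (postVar τ) (Icc a b) (gaussianReal 0 1) :=
  (continuous_postVar hτ).integrableOn_Icc

lemma rational_le_integral_postVar (hτ : τ ∈ Ioo 0 1) (hT : 10 ≤ T) :
    0.99 * (5 * τ / (8 + 7 * τ)) ≤ ∫ y in Icc (-T) T, postVar τ y ∂gaussianReal 0 1 := by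
  have := hτ.1
  have h_mass : 0.99 ≤ (gaussianReal 0 1).real (Icc (-T) T) := by
    refine le_trans ?_ (le_gaussianReal_Icc (by linarith))
    have : 1 / T ^ 2 ≤ 1 / 10 ^ 2 := by gcongr
    linarith
  calc 0.99 * (5 * τ / (8 + 7 * τ))
      ≤ (gaussianReal 0 1).real (Icc (-T) T) * (5 * τ / (8 + 7 * τ)) := by gcongr
    _ = ∫ _ in Icc (-T) T, 5 * τ / (8 + 7 * τ) ∂gaussianReal 0 1 := by
        rw [setIntegral_const, smul_eq_mul]
    _ ≤ ∫ y in Icc (-T) T, postVar τ y ∂gaussianReal 0 1 :=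
        integral_mono (integrable_const _) (integrableOn_postVar hτ _ _) (rational_le_postVar hτ)

lemma integral_error_factor_ge (h_pos : 0 < τ) (h_le : τ ≤ 1 / 10) :
    2 * √(log τ⁻¹) * 0.72 ≤ ∫ y in -√(log τ⁻¹)..√(log τ⁻¹),
      (1 - π / 2 * τ - τ * y ^ 2 * (exp (y ^ 2 / 2) + 5) / 5) := by
  set t := √(log τ⁻¹)
  have h_t : 0 ≤ t := sqrt_nonneg _
  have h_t_sq : t ^ 2 = log τ⁻¹ :=
    sq_sqrt (log_nonneg ((one_le_inv₀ h_pos).2 (by linarith)))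
  have h_int : ∀ {f : ℝ → ℝ}, Continuous f → IntervalIntegrable f volume (-t) t :=
    fun h => h.intervalIntegrable (-t) t
  have h_integral : ∫ y in -t..t, (1 - π / 2 * τ - τ * y ^ 2 * (exp (y ^ 2 / 2) + 5) / 5) =
      2 * t * (1 - π / 2 * τ - τ * t ^ 2 / 3) -
        τ / 5 * ∫ y in -t..t, y ^ 2 * exp (y ^ 2 / 2) := by
    have h_split : ∀ y, 1 - π / 2 * τ - τ * y ^ 2 * (exp (y ^ 2 / 2) + 5) / 5 =
        (1 - π / 2 * τ) - τ * y ^ 2 - τ / 5 * (y ^ 2 * exp (y ^ 2 / 2)) := fun y => by ring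
    simp_rw [h_split]
    rw [intervalIntegral.integral_sub (h_int (by fun_prop)) (h_int (by fun_prop)),
      intervalIntegral.integral_sub (h_int (by fun_prop)) (h_int (by fun_prop)),
      intervalIntegral.integral_const, intervalIntegral.integral_const_mul, integral_pow,
      intervalIntegral.integral_const_mul, smul_eq_mul]
    push_cast
    ring
  have h_exp : τ * exp (t ^ 2 / 2) = √τ := by
    rw [h_t_sq, log_inv, neg_div, exp_neg, exp_half, exp_log h_pos, ← div_eq_mul_inv, div_sqrt]
  have h_sqrt : √τ - τ ≤ 0.22 := by
    have h_le' : √τ ≤ 0.32 := sqrt_le_iff.2 ⟨by norm_num, by linarith⟩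
    nlinarith [sq_sqrt h_pos.le, sqrt_nonneg τ]
  have h_log : τ * t ^ 2 ≤ 0.2311 := by
    rw [h_t_sq]
    exact mul_log_inv_le_of_le_one_tenth h_pos h_le
  have h_pi : π / 2 * τ ≤ 0.158 := by nlinarith [pi_lt_d2]
  have h_sq_exp := mul_le_mul_of_nonneg_left (integral_sq_mul_exp_sq_le h_t)
    (by positivity : 0 ≤ τ / 5)
  have h_factor : 0.72 ≤ 1 - π / 2 * τ - τ * t ^ 2 / 3 - (√τ - τ) / 5 := by linarith
  rw [h_integral]
  calc 2 * t * 0.72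
      ≤ 2 * t * (1 - π / 2 * τ - τ * t ^ 2 / 3 - (√τ - τ) / 5) := by gcongr
    _ = 2 * t * (1 - π / 2 * τ - τ * t ^ 2 / 3) - τ / 5 * (2 * t * (exp (t ^ 2 / 2) - 1)) := by
        rw [← h_exp]
        ring
    _ ≤ _ := sub_le_sub_left h_sq_exp _

lemma zet_le_integral_postVar_of_le_one_tenth (h_pos : 0 < τ) (h_le : τ ≤ 1 / 10)
    (hT : zet τ ≤ T) :
    0.257 * (τ * zet τ) ≤ ∫ y in Icc (-T) T, postVar τ y ∂gaussianReal 0 1 := by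
  have hτ : τ ∈ Ioo 0 1 := ⟨h_pos, by linarith⟩
  set t := √(log τ⁻¹)
  have h_t : 0 ≤ t := sqrt_nonneg _
  have h_zet : zet τ = √2 * t := zet_eq_sqrt_two_mul τ
  have h_tT : t ≤ T := (le_mul_of_one_le_left h_t (one_le_sqrt.2 one_le_two)).trans (h_zet ▸ hT)
  have h_pi : π * √π ≤ 5.6 := by
    have : √π ≤ 1.773 := sqrt_le_iff.2 ⟨by norm_num, by linarith [pi_lt_d4]⟩
    nlinarith [pi_lt_d4, pi_pos, sqrt_nonneg π]
  calc 0.257 * (τ * zet τ)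
      ≤ 1.44 / 5.6 * (τ * zet τ) := by
        have := mul_nonneg h_pos.le (zet_nonneg τ)
        linarith
    _ ≤ 1.44 / (π * √π) * (τ * zet τ) := by
        have := zet_nonneg τ
        gcongr
    _ = (√(2 * π))⁻¹ * (2 * τ / π * (2 * t * 0.72)) := by
        rw [h_zet, sqrt_mul zero_le_two]
        field_simp
        rw [sq_sqrt zero_le_two]
        ring
    _ ≤ (√(2 * π))⁻¹ * ∫ y in -t..t,
          2 * τ / π * (1 - π / 2 * τ - τ * y ^ 2 * (exp (y ^ 2 / 2) + 5) / 5) := by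
        rw [intervalIntegral.integral_const_mul]
        gcongr
        exact integral_error_factor_ge h_pos h_le
    _ = ∫ y in Icc (-t) t, exp (y ^ 2 / 2) * (2 * τ / π *
          (1 - π / 2 * τ - τ * y ^ 2 * (exp (y ^ 2 / 2) + 5) / 5)) ∂gaussianReal 0 1 :=
        (setIntegral_Icc_exp_mul_gaussianReal (neg_le_self h_t) _).symm
    _ ≤ ∫ y in Icc (-t) t, postVar τ y ∂gaussianReal 0 1 := by
        refine integral_mono (Continuous.integrableOn_Icc (by fun_prop))
          (integrableOn_postVar hτ _ _) fun y => ?_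
        simpa only [mul_assoc] using exp_mul_le_postVar_of_le_one_tenth h_pos h_le y
    _ ≤ ∫ y in Icc (-T) T, postVar τ y ∂gaussianReal 0 1 :=
        setIntegral_mono_set (integrableOn_postVar hτ _ _)
          (ae_of_all _ fun y => postVar_nonneg h_pos.le y)
          (Icc_subset_Icc (neg_le_neg h_tT) h_tT).eventuallyLE

lemma zet_sq (hτ : τ ∈ Ioo 0 1) : zet τ ^ 2 = 2 * log τ⁻¹ := by
  rw [zet, one_div, sq_sqrt]
  exact mul_nonneg zero_le_two (log_nonneg ((one_le_inv₀ hτ.1).2 hτ.2.le))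

lemma zet_mul_le_rational_of_one_tenth_le (hτ : τ ∈ Ioo 0 1) (h_ge : 1 / 10 ≤ τ) :
    0.251 * (τ * (zet τ + 0.01)) ≤ 0.99 * (5 * τ / (8 + 7 * τ)) := by
  set z := zet τ
  have h_z : 0 ≤ z := zet_nonneg τ
  have h_log : z ^ 2 ≤ 5.136 * (1 - τ) := by
    rw [zet_sq hτ]
    linarith [log_inv_le_of_one_tenth_le h_ge hτ.2.le]
  have h_cubic : 0.251 * ((z + 0.01) * (8 + 7 * τ)) ≤ 4.95 := by
    calc 0.251 * ((z + 0.01) * (8 + 7 * τ))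
        ≤ 0.251 * ((z + 0.01) * (15 - 1.3629 * z ^ 2)) := by
          gcongr
          linarith [sq_nonneg z]
      _ ≤ 4.95 := by
          nlinarith [mul_nonneg h_z (sq_nonneg (z - 1.915)), sq_nonneg (z - 1.915)]
  have := hτ.1
  rw [mul_div_assoc', le_div_iff₀ (by positivity)]
  calc 0.251 * (τ * (z + 0.01)) * (8 + 7 * τ)
      = 0.251 * ((z + 0.01) * (8 + 7 * τ)) * τ := by ring
    _ ≤ 4.95 * τ := by gcongr
    _ = 0.99 * (5 * τ) := by ring

lemma one_le_zet_of_le_one_tenth (h_pos : 0 < τ) (h_le : τ ≤ 1 / 10) : 1 ≤ zet τ := by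
  have h_log : 1 / 2 ≤ log τ⁻¹ := by
    have := one_sub_inv_le_log_of_pos (inv_pos.2 h_pos)
    rw [inv_inv] at this
    linarith
  rw [zet, one_div]
  exact one_le_sqrt.2 (by linarith)

lemma zet_le_integral_postVar (hτ : τ ∈ Ioo 0 1) :
    0.251 * (τ * (zet τ + 0.01)) ≤
      ∫ y in Icc (-(10 + zet τ)) (10 + zet τ), postVar τ y ∂gaussianReal 0 1 := by
  rcases le_total τ (1 / 10) with h_le | h_ge
  · refine le_trans ?_ (zet_le_integral_postVar_of_le_one_tenth hτ.1 h_le (by linarith))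
    nlinarith [one_le_zet_of_le_one_tenth hτ.1 h_le, hτ.1]
  · exact (zet_mul_le_rational_of_one_tenth_le hτ h_ge).trans
      (rational_le_integral_postVar hτ (by linarith [zet_nonneg τ]))

lemma integral_postMom4_bound_le {z : ℝ} (hτ : 0 ≤ τ) (hz : 0 ≤ z) :
    ∫ y in Icc (-(10 + z)) (10 + z), 16 * τ * ((y ^ 2 + 9) * exp (y ^ 2 / 2)) ∂gaussianReal 0 1 ≤
      14000 * (τ * (1 + z) ^ 3) := by
  have h_factor : ∀ y : ℝ, 16 * τ * ((y ^ 2 + 9) * exp (y ^ 2 / 2)) =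
      exp (y ^ 2 / 2) * (16 * τ * (y ^ 2 + 9)) := fun y => by ring
  have h_pi : (√(2 * π))⁻¹ ≤ 1 :=
    inv_le_one_of_one_le₀ (one_le_sqrt.2 (by linarith [pi_gt_three]))
  have h_cubic : 2 / 3 * (10 + z) ^ 3 + 18 * (10 + z) ≤ 14000 / 16 * (1 + z) ^ 3 := by
    nlinarith [pow_nonneg hz 2, pow_nonneg hz 3]
  have h_integral : ∫ y in -(10 + z)..(10 + z), 16 * τ * (y ^ 2 + 9) =
      16 * τ * (2 / 3 * (10 + z) ^ 3 + 18 * (10 + z)) := by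
    rw [intervalIntegral.integral_const_mul, intervalIntegral.integral_add
      (Continuous.intervalIntegrable (by fun_prop) _ _) (by simp), integral_pow,
      intervalIntegral.integral_const, smul_eq_mul]
    push_cast
    ring
  simp_rw [h_factor]
  rw [setIntegral_Icc_exp_mul_gaussianReal (by linarith), h_integral]
  calc (√(2 * π))⁻¹ * (16 * τ * (2 / 3 * (10 + z) ^ 3 + 18 * (10 + z)))
      ≤ 1 * (16 * τ * (14000 / 16 * (1 + z) ^ 3)) := by gcongr
    _ = 14000 * (τ * (1 + z) ^ 3) := by ring

end GaussianAverages

/-! ### Chernoff bound for the posterior mass of small balls -/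

section ProductMeasures

variable {ι E : Type*} [Fintype ι] [MeasurableSpace E] {μ : ι → Measure E}
  [∀ i, SigmaFinite (μ i)] {f : ι → E → ℝ}

lemma setIntegral_prod_le_exp_mul_prod_integral {g : ι → E → ℝ} {s : ℝ} {A : Set (ι → E)}
    (hf : ∀ i, Integrable (f i) (μ i)) (hf_nonneg : ∀ i x, 0 ≤ f i x)
    (hfg : ∀ i, Integrable (fun x => exp (-(g i x)) * f i x) (μ i))
    (hA : MeasurableSet A) (hg : ∀ x ∈ A, ∑ i, g i (x i) ≤ s) :
    ∫ x in A, ∏ i, f i (x i) ∂Measure.pi μ ≤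
      exp s * ∏ i, ∫ x, exp (-(g i x)) * f i x ∂μ i := by
  have h_tilted := (Integrable.fintype_prod_dep hfg).const_mul (exp s)
  calc ∫ x in A, ∏ i, f i (x i) ∂Measure.pi μ
      ≤ ∫ x in A, exp s * ∏ i, (exp (-(g i (x i))) * f i (x i)) ∂Measure.pi μ := by
        refine setIntegral_mono_on (Integrable.fintype_prod_dep hf).integrableOn
          h_tilted.integrableOn hA fun x hx => ?_
        rw [Finset.prod_mul_distrib, ← exp_sum, ← mul_assoc, ← exp_add, Finset.sum_neg_distrib]
        exact le_mul_of_one_le_left (Finset.prod_nonneg fun i _ => hf_nonneg i (x i))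
          (one_le_exp (by linarith [hg x hx]))
    _ ≤ ∫ x, exp s * ∏ i, (exp (-(g i (x i))) * f i (x i)) ∂Measure.pi μ :=
        setIntegral_le_integral h_tilted <| ae_of_all _ fun x => mul_nonneg (exp_pos s).le <|
          Finset.prod_nonneg fun i _ => mul_nonneg (exp_pos _).le (hf_nonneg i (x i))
    _ = exp s * ∏ i, ∫ x, exp (-(g i x)) * f i x ∂μ i := by
        rw [integral_const_mul, integral_fintype_prod_eq_prod (fun i x => exp (-(g i x)) * f i x)]

lemma measureReal_pi_le_prod_integral_div {c : ℝ} (hc : 0 < c)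
    (hf : ∀ i, Integrable (f i) (μ i)) (hf_nonneg : ∀ i x, 0 ≤ f i x) :
    (Measure.pi μ).real {x | c ≤ ∏ i, f i (x i)} ≤ (∏ i, ∫ x, f i x ∂μ i) / c := by
  rw [le_div_iff₀' hc, ← integral_fintype_prod_eq_prod]
  exact mul_meas_ge_le_integral_of_nonneg
    (ae_of_all _ fun x => Finset.prod_nonneg fun i _ => hf_nonneg i (x i))
    (Integrable.fintype_prod_dep hf) c

end ProductMeasures

/-- The posterior Laplace transform, at `l`, of the squared deviation of `θᵢ` from its posterior
mean, given `Yᵢ = y`. -/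
def postLaplace (τ l y : ℝ) : ℝ :=
  (∫ θ, exp (-(l * (θ - postMean τ y) ^ 2)) * postDens τ y θ) / margDens τ y

/-- A measurable upper bound for `postLaplace τ l`: its second-order expansion in `l` for
`|y| ≤ T`, and `1` elsewhere. -/
def laplaceEnvelope (τ l T y : ℝ) : ℝ :=
  1 + (Icc (-T) T).indicator
    (fun y => l ^ 2 / 2 * (16 * τ * ((y ^ 2 + 9) * exp (y ^ 2 / 2))) - l * postVar τ y) y

/-- An upper bound for the logarithm of the expectation of `postLaplace τ l` under a standard normal
observation. -/
def laplaceExponent (τ l : ℝ) : ℝ :=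
  7000 * l ^ 2 * (τ * (1 + zet τ) ^ 3) - l * (0.251 * (τ * (zet τ + 0.01)))

/-- The upper bound for `postLaplace τ l` used at a coordinate with true mean `a`: nontrivial only
if `a = 0`. -/
def coordEnvelope (τ l a y : ℝ) : ℝ :=
  if a = 0 then laplaceEnvelope τ l (10 + zet τ) y else 1

section Chernoff

variable {τ l : ℝ}

lemma integrable_exp_neg_mul_postDens (hτ : τ ∈ Ioo 0 1) (hl : 0 ≤ l) (y a : ℝ) :
    Integrable fun θ => exp (-(l * (θ - a) ^ 2)) * postDens τ y θ :=
  integrable_mul_postDens (C := 1) hτ y (by fun_prop) fun θ => by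
    rw [abs_exp, one_mul]
    exact (exp_le_one_iff.2 (neg_nonpos.2 (by positivity))).trans
      (le_add_of_nonneg_right (by positivity))

lemma postLaplace_nonneg (hτ : 0 ≤ τ) (l y : ℝ) : 0 ≤ postLaplace τ l y :=
  div_nonneg (integral_nonneg fun _ => mul_nonneg (exp_pos _).le (postDens_nonneg hτ y _))
    (integral_nonneg fun _ => postDens_nonneg hτ y _)

lemma postLaplace_le_one (hτ : τ ∈ Ioo 0 1) (hl : 0 ≤ l) (y : ℝ) : postLaplace τ l y ≤ 1 := by
  rw [postLaplace, div_le_one (margDens_pos hτ y)]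
  exact integral_mono (integrable_exp_neg_mul_postDens hτ hl y _) (integrable_postDens hτ y)
    fun θ => mul_le_of_le_one_left (postDens_nonneg hτ.1.le y θ)
      (exp_le_one_iff.2 (neg_nonpos.2 (by positivity)))

lemma postLaplace_le_quadratic (hτ : τ ∈ Ioo 0 1) (hl : 0 ≤ l) (y : ℝ) :
    postLaplace τ l y ≤ 1 + (l ^ 2 / 2 * postMom4 τ y - l * postVar τ y) := by
  set a := postMean τ y with ha
  have h_zero := integrable_postDens hτ y
  have h_two := (integrable_sub_pow_mul_postDens hτ y a (by norm_num : 2 ≤ 4)).const_mul l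
  have h_four := (integrable_sub_pow_mul_postDens hτ y a le_rfl).const_mul (l ^ 2 / 2)
  have h_sub : Integrable fun θ => l ^ 2 / 2 * ((θ - a) ^ 4 * postDens τ y θ) -
      l * ((θ - a) ^ 2 * postDens τ y θ) := h_four.sub h_two
  calc postLaplace τ l y
      ≤ (∫ θ, (postDens τ y θ + (l ^ 2 / 2 * ((θ - a) ^ 4 * postDens τ y θ) -
          l * ((θ - a) ^ 2 * postDens τ y θ)))) / margDens τ y := by
        refine div_le_div_of_nonneg_right ?_ (margDens_pos hτ y).le
        refine integral_mono (integrable_exp_neg_mul_postDens hτ hl y a)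
          (h_zero.add h_sub) fun θ => ?_
        have h_exp := mul_le_mul_of_nonneg_right
          (exp_neg_le_quadratic (by positivity : 0 ≤ l * (θ - a) ^ 2))
          (postDens_nonneg hτ.1.le y θ)
        exact h_exp.trans_eq (by ring)
    _ = 1 + (l ^ 2 / 2 * postMom4 τ y - l * postVar τ y) := by
        rw [integral_add h_zero h_sub, integral_sub h_four h_two, integral_const_mul,
          integral_const_mul, postMom4, postVar, ← ha, add_div, sub_div, mul_div_assoc,
          mul_div_assoc]
        congr 1
        exact div_self (margDens_pos hτ y).ne'

lemma postLaplace_le_laplaceEnvelope (hτ : τ ∈ Ioo 0 1) (hl : 0 ≤ l) (T y : ℝ) :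
    postLaplace τ l y ≤ laplaceEnvelope τ l T y := by
  by_cases hy : y ∈ Icc (-T) T
  · rw [laplaceEnvelope, indicator_of_mem hy]
    refine (postLaplace_le_quadratic hτ hl y).trans ?_
    gcongr
    exact postMom4_le hτ y
  · rw [laplaceEnvelope, indicator_of_notMem hy, add_zero]
    exact postLaplace_le_one hτ hl y

lemma integrable_laplaceEnvelope_indicator (hτ : τ ∈ Ioo 0 1) (l T : ℝ) :
    Integrable ((Icc (-T) T).indicator
      (fun y => l ^ 2 / 2 * (16 * τ * ((y ^ 2 + 9) * exp (y ^ 2 / 2))) - l * postVar τ y))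
      (gaussianReal 0 1) := by
  have h_cont := continuous_postVar hτ
  exact (Continuous.integrableOn_Icc (by fun_prop)).integrable_indicator measurableSet_Icc

lemma integrable_laplaceEnvelope (hτ : τ ∈ Ioo 0 1) (l T : ℝ) :
    Integrable (laplaceEnvelope τ l T) (gaussianReal 0 1) :=
  (integrable_const 1).add (integrable_laplaceEnvelope_indicator hτ l T)

lemma integral_laplaceEnvelope_le (hτ : τ ∈ Ioo 0 1) (hl : 0 ≤ l) :
    ∫ y, laplaceEnvelope τ l (10 + zet τ) y ∂gaussianReal 0 1 ≤
      exp (laplaceExponent τ l) := by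
  set T := 10 + zet τ
  have h_quartic : IntegrableOn (fun y => 16 * τ * ((y ^ 2 + 9) * exp (y ^ 2 / 2)))
    (Icc (-T) T) (gaussianReal 0 1) := Continuous.integrableOn_Icc (by fun_prop)
  calc ∫ y, laplaceEnvelope τ l T y ∂gaussianReal 0 1
      = 1 + (l ^ 2 / 2 * (∫ y in Icc (-T) T,
          16 * τ * ((y ^ 2 + 9) * exp (y ^ 2 / 2)) ∂gaussianReal 0 1) -
          l * ∫ y in Icc (-T) T, postVar τ y ∂gaussianReal 0 1) := by
        simp_rw [laplaceEnvelope]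
        rw [integral_add (integrable_const 1) (integrable_laplaceEnvelope_indicator hτ l T),
          integral_indicator measurableSet_Icc, integral_sub (h_quartic.const_mul _)
            ((integrableOn_postVar hτ _ _).const_mul l),
          integral_const_mul (l ^ 2 / 2), integral_const_mul l]
        simp
    _ ≤ 1 + (l ^ 2 / 2 * (14000 * (τ * (1 + zet τ) ^ 3)) -
          l * (0.251 * (τ * (zet τ + 0.01)))) := by
        gcongr
        · exact integral_postMom4_bound_le hτ.1.le (zet_nonneg τ)
        · exact zet_le_integral_postVar hτ
    _ = laplaceExponent τ l + 1 := by
        rw [laplaceExponent]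
        ring
    _ ≤ _ := add_one_le_exp _

lemma postLaplace_le_coordEnvelope (hτ : τ ∈ Ioo 0 1) (hl : 0 ≤ l) (a y : ℝ) :
    postLaplace τ l y ≤ coordEnvelope τ l a y := by
  rw [coordEnvelope]
  split_ifs
  · exact postLaplace_le_laplaceEnvelope hτ hl _ y
  · exact postLaplace_le_one hτ hl y

lemma integrable_coordEnvelope (hτ : τ ∈ Ioo 0 1) (l a : ℝ) :
    Integrable (coordEnvelope τ l a) (gaussianReal a 1) := by
  unfold coordEnvelope
  split_ifs with h
  · exact h ▸ integrable_laplaceEnvelope hτ l (10 + zet τ)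
  · exact integrable_const 1

lemma integral_coordEnvelope_le (hτ : τ ∈ Ioo 0 1) (hl : 0 ≤ l) (a : ℝ) :
    ∫ y, coordEnvelope τ l a y ∂gaussianReal a 1 ≤
      if a = 0 then exp (laplaceExponent τ l) else 1 := by
  by_cases h : a = 0
  · simpa [coordEnvelope, h] using integral_laplaceEnvelope_le hτ hl
  · simp [coordEnvelope, h]

variable {n : ℕ}

lemma integrable_fullDens (hτ : τ ∈ Ioo 0 1) (y : Fin n → ℝ) : Integrable (fullDens τ y) :=
  Integrable.fintype_prod fun i => integrable_postDens hτ (y i)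

lemma fullDens_nonneg (hτ : 0 ≤ τ) (y θ : Fin n → ℝ) : 0 ≤ fullDens τ y θ :=
  Finset.prod_nonneg fun i _ => postDens_nonneg hτ (y i) (θ i)

lemma integral_fullDens (τ : ℝ) (y : Fin n → ℝ) : ∫ θ, fullDens τ y θ = ∏ i, margDens τ (y i) :=
  integral_fintype_prod_volume_eq_prod fun i => postDens τ (y i)

lemma fullPostProb_mono (hτ : τ ∈ Ioo 0 1) (y : Fin n → ℝ) {A B : Set (Fin n → ℝ)} (hAB : A ⊆ B) :
    fullPostProb τ y A ≤ fullPostProb τ y B :=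
  div_le_div_of_nonneg_right
    (setIntegral_mono_set (integrable_fullDens hτ y).integrableOn
      (ae_of_all _ fun θ => fullDens_nonneg hτ.1.le y θ) hAB.eventuallyLE)
    (integral_nonneg fun θ => fullDens_nonneg hτ.1.le y θ)

lemma continuous_l2dist (a : Fin n → ℝ) : Continuous fun θ => l2dist θ a := by
  unfold l2dist
  fun_prop

lemma fullPostProb_ball_le (hτ : τ ∈ Ioo 0 1) (hl : 0 ≤ l) {r : ℝ} (hr : 0 ≤ r)
    (y : Fin n → ℝ) :
    fullPostProb τ y {θ | l2dist θ (fullPostMean τ y) ≤ r} ≤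
      exp (l * r ^ 2) * ∏ i, postLaplace τ l (y i) := by
  have h_ball : ∀ θ ∈ {θ | l2dist θ (fullPostMean τ y) ≤ r},
      ∑ i, l * (θ i - postMean τ (y i)) ^ 2 ≤ l * r ^ 2 := fun θ hθ => by
    rw [← Finset.mul_sum]
    gcongr
    exact (sqrt_le_left hr).1 hθ
  have h_chernoff := setIntegral_prod_le_exp_mul_prod_integral
    (fun i => integrable_postDens hτ (y i)) (fun i => postDens_nonneg hτ.1.le (y i))
    (fun i => integrable_exp_neg_mul_postDens hτ hl (y i) (postMean τ (y i)))
    (measurableSet_le (continuous_l2dist _).measurable measurable_const) h_ball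
  simp only [postLaplace]
  rw [fullPostProb, integral_fullDens, Finset.prod_div_distrib, mul_div_assoc']
  exact div_le_div_of_nonneg_right h_chernoff (Finset.prod_nonneg fun i _ =>
    (margDens_pos hτ (y i)).le)

instance isProbabilityMeasure_Pdata (θ₀ : Fin n → ℝ) : IsProbabilityMeasure (Pdata θ₀) := by
  unfold Pdata
  infer_instance

lemma measureReal_Pdata_fullPostProb_ball_ge_le (hτ : τ ∈ Ioo 0 1) (hl : 0 ≤ l) {r c : ℝ}
    (hr : 0 ≤ r) (hc : 0 < c) (θ₀ : Fin n → ℝ) :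
    (Pdata θ₀).real {y | c ≤ fullPostProb τ y {θ | l2dist θ (fullPostMean τ y) ≤ r}} ≤
      exp (l * r ^ 2 + {i | θ₀ i = 0}.ncard * laplaceExponent τ l) / c := by
  have h_le := postLaplace_le_coordEnvelope hτ hl
  have h_nonneg : ∀ i y, 0 ≤ coordEnvelope τ l (θ₀ i) y := fun i y =>
    (postLaplace_nonneg hτ.1.le l y).trans (h_le (θ₀ i) y)
  have h_subset : {y | c ≤ fullPostProb τ y {θ | l2dist θ (fullPostMean τ y) ≤ r}} ⊆
      {y | c / exp (l * r ^ 2) ≤ ∏ i, coordEnvelope τ l (θ₀ i) (y i)} := fun y hy => by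
    refine (div_le_iff₀' (exp_pos _)).2 (hy.trans ((fullPostProb_ball_le hτ hl hr y).trans ?_))
    gcongr with i
    · exact fun i _ => postLaplace_nonneg hτ.1.le l (y i)
    · exact h_le (θ₀ i) (y i)
  calc (Pdata θ₀).real {y | c ≤ fullPostProb τ y {θ | l2dist θ (fullPostMean τ y) ≤ r}}
      ≤ (Pdata θ₀).real {y | c / exp (l * r ^ 2) ≤ ∏ i, coordEnvelope τ l (θ₀ i) (y i)} :=
        measureReal_mono h_subset
    _ ≤ (∏ i, ∫ y, coordEnvelope τ l (θ₀ i) y ∂gaussianReal (θ₀ i) 1) / (c / exp (l * r ^ 2)) :=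
        measureReal_pi_le_prod_integral_div (by positivity)
          (fun i => integrable_coordEnvelope hτ l (θ₀ i)) h_nonneg
    _ ≤ (∏ i, if θ₀ i = 0 then exp (laplaceExponent τ l) else 1) / (c / exp (l * r ^ 2)) := by
        gcongr with i
        · exact fun i _ => integral_nonneg (h_nonneg i)
        · exact integral_coordEnvelope_le hτ hl (θ₀ i)
    _ = exp (l * r ^ 2 + {i | θ₀ i = 0}.ncard * laplaceExponent τ l) / c := by
        rw [Finset.prod_ite, Finset.prod_const_one, mul_one, Finset.prod_const, exp_add,
          exp_nat_mul, ncard_eq_toFinset_card', toFinset_ofPred]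
        field_simp

lemma ncard_zeros_add_ge {p : ℕ} {θ₀ : Fin n → ℝ} (h : θ₀ ∈ nearlyBlack n p) :
    n ≤ {i | θ₀ i = 0}.ncard + p := by
  have h_add := ncard_add_ncard_compl {i | θ₀ i = 0}
  rw [Nat.card_fin] at h_add
  have h_le : {i | θ₀ i = 0}ᶜ.ncard ≤ p := h
  omega

-- The tilt `l` must be of order `(1 + ζ)⁻²` for the linear term of the exponent to dominate.
lemma quarter_add_mul_laplaceExponent_le {N m : ℝ} (hτ : 0 ≤ τ) (hN : 0 ≤ N)
    (hm : 0.999 * N ≤ m) :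
    5e-8 / (1 + zet τ) ^ 2 * (N * τ * zet τ / 4) +
        m * laplaceExponent τ (5e-8 / (1 + zet τ) ^ 2) ≤
      -(1e-11 * (N * τ / (1 + zet τ))) := by
  have h_z := zet_nonneg τ
  rw [laplaceExponent]
  set z := zet τ
  set l := 5e-8 / (1 + z) ^ 2 with h_l
  have h_tilt : l * (1 + z) ^ 2 = 5e-8 := by
    rw [h_l]
    field_simp
  have h_exponent : 7000 * l ^ 2 * (τ * (1 + z) ^ 3) - l * (0.251 * (τ * (z + 0.01))) =
      -(l * τ * (0.25065 * z + 0.00216)) := by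
    linear_combination 7000 * l * τ * (1 + z) * h_tilt
  calc l * (N * τ * z / 4) + m * (7000 * l ^ 2 * (τ * (1 + z) ^ 3) -
        l * (0.251 * (τ * (z + 0.01))))
      = l * (N * τ * z / 4) - m * (l * τ * (0.25065 * z + 0.00216)) := by
        rw [h_exponent]
        ring
    _ ≤ l * (N * τ * z / 4) - 0.999 * N * (l * τ * (0.25065 * z + 0.00216)) := by gcongr
    _ ≤ -(2e-4 * (N * τ * l * (1 + z))) := by
        have : 0 ≤ N * τ * l * z := by positivity
        have : 0 ≤ N * τ * l := by positivity
        linarith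
    _ = -(1e-11 * (N * τ / (1 + z))) := by
        rw [h_l]
        field_simp
        ring

lemma measureReal_Pdata_le_exp_neg (hτ : τ ∈ Ioo 0 1) {c : ℝ} (hc : 0 < c) {θ₀ : Fin n → ℝ}
    (h_zeros : 0.999 * n ≤ ({i | θ₀ i = 0}.ncard : ℝ)) :
    (Pdata θ₀).real {y | c ≤ fullPostProb τ y
        {θ | l2dist θ (fullPostMean τ y) ≤ 0.5 * √(n * τ * zet τ)}} ≤
      exp (-(1e-11 * (n * τ / (1 + zet τ)))) / c := by
  have := hτ.1
  have h_z := zet_nonneg τ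
  have h_radius : (0.5 * √(n * τ * zet τ)) ^ 2 = n * τ * zet τ / 4 := by
    rw [mul_pow, sq_sqrt (by positivity)]
    ring
  refine (measureReal_Pdata_fullPostProb_ball_ge_le hτ
    (by positivity : 0 ≤ 5e-8 / (1 + zet τ) ^ 2) (by positivity) hc θ₀).trans ?_
  rw [h_radius]
  gcongr
  exact quarter_add_mul_laplaceExponent_le hτ.1.le n.cast_nonneg h_zeros

end Chernoff

/-! ### Asymptotics -/

lemma tendsto_measure_one_of_measureReal_compl_le {Ω : ℕ → Type*} [∀ n, MeasurableSpace (Ω n)]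
    {P : (n : ℕ) → Measure (Ω n)} [∀ n, IsProbabilityMeasure (P n)] {S : (n : ℕ) → Set (Ω n)}
    {b : ℕ → ℝ} (hb : Tendsto b atTop (nhds 0))
    (h_compl : ∀ᶠ n in atTop, (P n).real (S n)ᶜ ≤ b n) :
    Tendsto (fun n => P n (S n)) atTop (nhds 1) := by
  rw [← ENNReal.tendsto_toReal_iff (fun n => measure_ne_top _ _) ENNReal.one_ne_top,
    ENNReal.toReal_one]
  have h_lower : Tendsto (fun n => 1 - b n) atTop (nhds 1) := by
    simpa only [sub_zero] using hb.const_sub 1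
  refine tendsto_of_tendsto_of_tendsto_of_le_of_le' h_lower tendsto_const_nhds ?_
    (Eventually.of_forall fun n => measureReal_le_one)
  filter_upwards [h_compl] with n hn
  have h_union := measureReal_union_le (μ := P n) (S n) (S n)ᶜ
  rw [union_compl_self, probReal_univ] at h_union
  change 1 - b n ≤ (P n).real (S n)
  linarith

lemma lt_one_of_zet_pos {τ : ℝ} (h : 0 < zet τ) : τ < 1 := by
  contrapose! h
  rw [zet, one_div, log_inv]
  exact (sqrt_eq_zero_of_nonpos (by linarith [log_nonneg h])).le

lemma min_le_mul_div_one_add_zet {τ N : ℝ} (hτ : τ ∈ Ioo 0 1) (hN : 0 ≤ N) :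
    min (N / 20) (N * τ / zet τ / 2) ≤ N * τ / (1 + zet τ) := by
  have h_τ_pos := hτ.1
  rcases le_or_gt 1 (zet τ) with h_zet | h_lt
  · refine (min_le_right _ _).trans ?_
    rw [div_div]
    gcongr
    linarith
  · refine (min_le_left _ _).trans ?_
    have h_τ_ge : 1 / 10 ≤ τ := by
      contrapose! h_lt
      exact one_le_zet_of_le_one_tenth h_τ_pos h_lt.le
    rw [le_div_iff₀ (by linarith [zet_nonneg τ])]
    nlinarith

section Asymptotics

variable {τ : ℕ → ℝ}

-- For `τ ≥ 1` the quotient is the junk value `x / 0 = 0`.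
lemma eventually_mem_Ioo_of_tendsto_mul_div_zet (hτ_pos : ∀ n, 0 < τ n)
    (h : Tendsto (fun n : ℕ => ((n : ℝ) + 1) * τ n / zet (τ n)) atTop atTop) :
    ∀ᶠ n in atTop, τ n ∈ Ioo 0 1 := by
  filter_upwards [h.eventually_gt_atTop 0] with n hn
  refine ⟨hτ_pos n, lt_one_of_zet_pos ((zet_nonneg _).lt_of_ne' fun h_zero => ?_)⟩
  rw [h_zero, div_zero] at hn
  exact hn.false

lemma tendsto_mul_div_one_add_zet (hτ_pos : ∀ n, 0 < τ n)
    (h : Tendsto (fun n : ℕ => ((n : ℝ) + 1) * τ n / zet (τ n)) atTop atTop) :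
    Tendsto (fun n : ℕ => ((n : ℝ) + 1) * τ n / (1 + zet (τ n))) atTop atTop := by
  have h_linear : Tendsto (fun n : ℕ => ((n : ℝ) + 1) / 20) atTop atTop :=
    (tendsto_natCast_atTop_atTop.atTop_add tendsto_const_nhds).atTop_div_const (by norm_num)
  refine tendsto_atTop.2 fun b => ?_
  filter_upwards [eventually_mem_Ioo_of_tendsto_mul_div_zet hτ_pos h,
    h_linear.eventually_ge_atTop b, (h.atTop_div_const two_pos).eventually_ge_atTop b]
    with n hn h_left h_right
  exact (le_min h_left h_right).trans (min_le_mul_div_one_add_zet hn (by positivity))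

end Asymptotics

lemma eventually_le_div_of_isLittleO {p : ℕ → ℕ}
    (hp : (fun n => (p n : ℝ)) =o[atTop] fun n => ((n : ℝ) + 1)) {c : ℝ} (hc : 0 < c) :
    ∀ᶠ n : ℕ in atTop, (p n : ℝ) ≤ ((n : ℝ) + 1) / c := by
  filter_upwards [hp.bound (inv_pos.2 hc)] with n hn
  rwa [norm_of_nonneg (by positivity), norm_of_nonneg (by positivity), inv_mul_eq_div] at hn

theorem stmt_8_general
    (α : ℝ) (hα : α < 1)
    (τ : ℕ → ℝ) (hτpos : ∀ n, 0 < τ n)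
    (hτζ : Tendsto (fun n : ℕ => ((n : ℝ) + 1) * τ n / zet (τ n)) atTop atTop)
    (p : ℕ → ℕ) (hp : ∀ᶠ n : ℕ in atTop, (p n : ℝ) ≤ ((n : ℝ) + 1) / 1000)
    (θ₀ : (n : ℕ) → Fin (n + 1) → ℝ) (hθ₀ : ∀ n, θ₀ n ∈ nearlyBlack (n + 1) (p n))
    (rball : (n : ℕ) → (Fin (n + 1) → ℝ) → ℝ)
    (hrball : ∀ (n : ℕ) (y : Fin (n + 1) → ℝ),
      1 - α ≤ fullPostProb (τ n) y
          {θ | l2dist θ (fullPostMean (τ n) y) ≤ rball n y}) :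
    Tendsto
      (fun n =>
        Pdata (θ₀ n)
          {y : Fin (n + 1) → ℝ |
            0.5 * Real.sqrt (((n : ℝ) + 1) * τ n * zet (τ n)) ≤ rball n y})
      atTop (nhds 1) := by
  have h_bound : Tendsto
      (fun n : ℕ => exp (-(1e-11 * (((n : ℝ) + 1) * τ n / (1 + zet (τ n))))) / (1 - α))
      atTop (nhds 0) := by
    rw [← zero_div (1 - α)]
    exact (tendsto_exp_neg_atTop_nhds_zero.comp ((tendsto_mul_div_one_add_zet hτpos
      hτζ).const_mul_atTop (by norm_num))).div_const _
  refine tendsto_measure_one_of_measureReal_compl_le h_bound ?_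
  filter_upwards [eventually_mem_Ioo_of_tendsto_mul_div_zet hτpos hτζ, hp] with n hτ hpn
  have h_zeros : 0.999 * ((n + 1 : ℕ) : ℝ) ≤ ({i | θ₀ n i = 0}.ncard : ℝ) := by
    have h_card : ((n + 1 : ℕ) : ℝ) ≤ {i | θ₀ n i = 0}.ncard + p n := by
      exact_mod_cast ncard_zeros_add_ge (hθ₀ n)
    push_cast at h_card ⊢
    linarith
  have h_small_ball := measureReal_Pdata_le_exp_neg hτ (sub_pos.2 hα) h_zeros
  push_cast at h_small_ball
  refine (measureReal_mono fun y hy => ?_).trans h_small_ball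
  rw [mem_compl_iff, mem_ofPred_eq, not_le] at hy
  exact (hrball n y).trans (fullPostProb_mono hτ y fun θ hθ => le_trans hθ hy.le)

theorem stmt_8
    (α : ℝ) (hα : α ∈ Set.Ioo (0 : ℝ) 1)
    (τ : ℕ → ℝ) (hτpos : ∀ n, 0 < τ n)
    (hτζ : Tendsto (fun n : ℕ => ((n : ℝ) + 1) * τ n / zet (τ n)) atTop atTop)
    (p : ℕ → ℕ) (hpo : (fun n => (p n : ℝ)) =o[atTop] fun n => ((n : ℝ) + 1))
    (θ₀ : (n : ℕ) → Fin (n + 1) → ℝ) (hθ₀ : ∀ n, θ₀ n ∈ nearlyBlack (n + 1) (p n))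
    (rball : (n : ℕ) → (Fin (n + 1) → ℝ) → ℝ)
    (hrball : ∀ (n : ℕ) (y : Fin (n + 1) → ℝ),
      fullPostProb (τ n) y
          {θ | l2dist θ (fullPostMean (τ n) y) ≤ rball n y} = 1 - α) :
    Tendsto
      (fun n =>
        Pdata (θ₀ n)
          {y : Fin (n + 1) → ℝ |
            0.5 * Real.sqrt (((n : ℝ) + 1) * τ n * zet (τ n)) ≤ rball n y})
      atTop (nhds 1) :=
  stmt_8_general α hα.2 τ hτpos hτζ p (eventually_le_div_of_isLittleO hpo (by norm_num)) θ₀ hθ₀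
    rball fun n y => (hrball n y).ge

end
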